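/- arXiv:1601.06118 — 4 statements merged into one kernel-verified Lean document; each statement's English description precedes it below -/
import Mathlib

section
/- Let A : ℝ → ℂ^{d×d} be real analytic and 1-periodic with rank A(x) ≤ 1 for all x, and let α ∈ ℝ be such that L₁(α,A) = −∞. Then there exist a real analytic 1-periodic function c : ℝ → ℂ and a real analytic 1-periodic unitary-valued function U : ℝ → U(d) such that U(x+α)* A(x) U(x) is the matrix whose only possibly nonzero entry is c(x) in position (d−1, d); i.e. the conjugated cocycle is the direct sum of a zero block and the 2×2 block [[0, c(x)], [0, 0]]. -/
open MeasureTheory Filter Topology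

/-- Iterates of the one-frequency cocycle: `A_n(x) = A(x+(n-1)α) ⋯ A(x+α) A(x)`. -/
noncomputable def matIter {d : ℕ} (α : ℝ) (A : ℝ → Matrix (Fin d) (Fin d) ℂ) :
    ℕ → ℝ → Matrix (Fin d) (Fin d) ℂ
  | 0, _ => 1
  | n + 1, x => matIter α A n (x + α) * A x

/-- The `k`-th largest singular value of a matrix, `1 ≤ k ≤ d`, via the
Courant–Fischer max–min characterization:
`σ_k(M) = max {t | ∃ V of dim k, ∀ v ∈ V, t‖v‖ ≤ ‖Mv‖}`. -/
noncomputable def singVal {d : ℕ} (k : ℕ) (M : Matrix (Fin d) (Fin d) ℂ) : ℝ :=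
  sSup {t : ℝ | ∃ V : Submodule ℂ (EuclideanSpace ℂ (Fin d)),
    Module.finrank ℂ V = k ∧ ∀ v ∈ V, t * ‖v‖ ≤ ‖(Matrix.toEuclideanLin M) v‖}

/-- The integral `∫ ln(g) dμ`, valued in `[-∞,∞]` (here `ln 0 = -∞`); by convention it is `-∞`
whenever the negative part of `ln g` is not `μ`-integrable. -/
noncomputable def elogIntegral {X : Type*} [MeasurableSpace X] (μ : Measure X) (g : X → ℝ) :
    EReal :=
  if μ {x | g x = 0} = 0 ∧ (∫⁻ x, ENNReal.ofReal (-Real.log (g x)) ∂μ) ≠ ⊤ then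
    (∫⁻ x, ENNReal.ofReal (Real.log (g x)) ∂μ).toEReal
      - (∫⁻ x, ENNReal.ofReal (-Real.log (g x)) ∂μ).toEReal
  else ⊥

/-- `L_k(α, A) = L`: the `k`-th Lyapunov exponent of the one-frequency cocycle `(α, A)`
is `L ∈ [-∞,∞)`, i.e. `L = lim_n (1/n) ∫₀¹ ln σ_k(A_n(x)) dx`. -/
def HasLyapunovExp {d : ℕ} (α : ℝ) (A : ℝ → Matrix (Fin d) (Fin d) ℂ) (k : ℕ) (L : EReal) :
    Prop :=
  Tendsto (fun n : ℕ => (((n : ℝ)⁻¹ : ℝ) : EReal)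
      * elogIntegral (volume.restrict (Set.Ioc (0:ℝ) 1))
          (fun x => singVal k (matIter α A n x)))
    atTop (𝓝 L)

/-- A real analytic, 1-periodic matrix valued map. -/
def AnalyticPeriodicMat {d e : ℕ} (A : ℝ → Matrix (Fin d) (Fin e) ℂ) : Prop :=
  Function.Periodic A 1 ∧ ∀ (x : ℝ) (i : Fin d) (j : Fin e), AnalyticAt ℝ (fun t => A t i j) x

open scoped ContDiff

section
variable {E : Type*} [NormedAddCommGroup E] [NormedSpace ℂ E]

def APer (f : ℝ → E) : Prop := Function.Periodic f 1 ∧ ContDiff ℝ ω f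

lemma APer.an {f : ℝ → E} [CompleteSpace E] (h : APer f) (x : ℝ) : AnalyticAt ℝ f x :=
  h.2.contDiffAt.analyticAt

lemma APer.ofAn {f : ℝ → E} [CompleteSpace E] (hp : Function.Periodic f 1) (h : ∀ x, AnalyticAt ℝ f x) : APer f :=
  ⟨hp, contDiff_iff_contDiffAt.2 fun x => (h x).contDiffAt⟩

noncomputable def qf (a x : ℝ) : ℂ :=
  Complex.exp (2 * Real.pi * Complex.I * x) - Complex.exp (2 * Real.pi * Complex.I * a)

lemma qf_zero {a x : ℝ} : qf a x = 0 ↔ ∃ n : ℤ, x = a + n := by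
  unfold qf
  rw [sub_eq_zero, Complex.exp_eq_exp_iff_exists_int]
  refine exists_congr fun n => ?_
  have h : (2 * Real.pi * Complex.I : ℂ) ≠ 0 := Complex.two_pi_I_ne_zero
  constructor
  · intro e
    have : (2 * Real.pi * Complex.I : ℂ) * x = (2 * Real.pi * Complex.I : ℂ) * (a + n) := by
      rw [e]; ring
    exact_mod_cast mul_left_cancel₀ h this
  · rintro rfl
    push_cast; ring

lemma qf_aper (a : ℝ) : APer (qf a) := by
  constructor
  · intro x
    unfold qf
    congr 1
    rw [Complex.exp_eq_exp_iff_exists_int]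
    exact ⟨1, by push_cast; ring⟩
  · unfold qf
    have : ContDiff ℝ ω (fun x : ℝ => (x : ℂ)) := Complex.ofRealCLM.contDiff
    exact ((contDiff_const.mul this).cexp).sub contDiff_const

lemma qf_deriv (a : ℝ) : deriv (qf a) a ≠ 0 := by
  have h1 : HasDerivAt (fun x : ℝ => (2 * Real.pi * Complex.I : ℂ) * x)
      ((2 * Real.pi * Complex.I : ℂ) * 1) a := (Complex.ofRealCLM.hasDerivAt (x := a)).const_mul _
  have h2 : HasDerivAt (qf a) _ a := (h1.cexp).sub_const _
  rw [h2.deriv]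
  exact mul_ne_zero (Complex.exp_ne_zero _) (by simp)

lemma aper_ne {f : ℝ → E} [CompleteSpace E] (h : APer f) (h0 : ∃ x, f x ≠ 0) (a : ℝ) :
    ∀ᶠ z in 𝓝[≠] a, f z ≠ 0 := by
  have hf : AnalyticOnNhd ℝ f Set.univ := fun x _ => h.an x
  rcases hf.eqOn_zero_or_eventually_ne_zero_of_preconnected isPreconnected_univ with h1 | h1
  · obtain ⟨x, hx⟩ := h0
    exact absurd (h1 (Set.mem_univ x)) hx
  · rw [eventually_iff] at *
    have := h1
    rw [mem_codiscreteWithin] at this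
    have h2 := this a (Set.mem_univ a)
    rw [disjoint_principal_right] at h2
    filter_upwards [h2] with y hy
    simpa using hy

lemma div_step {g : ℝ → E} [CompleteSpace E] (h : APer g) (h0 : ∃ x, g x ≠ 0) (a : ℝ) :
    ∃ (n : ℕ) (G : ℝ → E), APer G ∧ G a ≠ 0 ∧ ∀ x, g x = qf a x ^ n • G x := by
  have hne := aper_ne h h0 a
  have hg := h.an a
  obtain ⟨n, g1, hg1, hg1a, he⟩ := hg.exists_eventuallyEq_pow_smul_nonzero_iff.2 (by
    intro hz
    obtain ⟨x, hx⟩ := (hne.and (hz.filter_mono nhdsWithin_le_nhds)).exists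
    exact hx.1 hx.2)
  set r := dslope (qf a) a with hr
  have hra : r a ≠ 0 := by rw [hr, dslope_same]; exact qf_deriv a
  have hran : AnalyticAt ℝ r a := by
    obtain ⟨p, hp⟩ := (qf_aper a).an a
    exact ⟨_, hp.has_fpower_series_dslope_fslope⟩
  have hqa : qf a a = 0 := qf_zero.2 ⟨0, by simp⟩
  have hqr : ∀ x, qf a x = ((x - a : ℝ) : ℂ) * r x := by
    intro x
    have := sub_smul_dslope (qf a) a x
    rw [hqa, sub_zero] at this
    rw [← this, ← hr]; simp
  classical
  set G : ℝ → E := fun x => if qf a x = 0 then ((r a)^n)⁻¹ • g1 a else ((qf a x)^n)⁻¹ • g x with hG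
  have hGa : G a = ((r a)^n)⁻¹ • g1 a := by simp [hG, hqa]
  have hper : Function.Periodic G 1 := by
    intro x
    simp only [hG]
    rw [(qf_aper a).1 x, h.1 x]
  have hGan : AnalyticAt ℝ G a := by
    have : AnalyticAt ℝ (fun x => ((r x)^n)⁻¹ • g1 x) a :=
      ((hran.pow n).inv (pow_ne_zero _ hra)).smul hg1
    refine this.congr ?_
    have hrne : ∀ᶠ x in 𝓝 a, r x ≠ 0 := hran.continuousAt.eventually_ne hra
    filter_upwards [he, hrne] with x hx hrx
    by_cases hxa : x = a
    · subst hxa; exact hGa.symm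
    · have hxa' : ((x - a : ℝ) : ℂ) ≠ 0 := by
        rw [Complex.ofReal_ne_zero]; exact sub_ne_zero.2 hxa
      have hq : qf a x ≠ 0 := by rw [hqr]; exact mul_ne_zero hxa' hrx
      simp only [hG, if_neg hq]
      rw [hx, hqr, mul_pow, mul_inv]
      have : ((x - a) ^ n : ℝ) • g1 x = (((x - a : ℝ) : ℂ) ^ n) • g1 x := by
        rw [← Complex.ofReal_pow]; exact (Complex.coe_smul _ _).symm
      rw [this, smul_smul, mul_comm _ ((r x ^ n)⁻¹), mul_assoc, inv_mul_cancel₀ (pow_ne_zero _ hxa'),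
        mul_one]
  refine ⟨n, G, APer.ofAn hper ?_, ?_, ?_⟩
  · intro x
    by_cases hx : qf a x = 0
    · obtain ⟨m, rfl⟩ := qf_zero.1 hx
      have hs : G = fun y => G (y - m) := by
        funext y
        have := (hper.int_mul m) (y - m)
        simpa using this
      rw [hs]
      have : AnalyticAt ℝ G ((fun y : ℝ => y - m) (a + m)) := by simpa using hGan
      exact this.comp (f := fun y : ℝ => y - m) (by fun_prop)
    · have hq := (qf_aper a).an x
      have : AnalyticAt ℝ (fun x => ((qf a x)^n)⁻¹ • g x) x :=
        ((hq.pow n).inv (pow_ne_zero _ hx)).smul (h.an x)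
      refine this.congr ?_
      filter_upwards [hq.continuousAt.eventually_ne hx] with y hy
      simp [hG, hy]
  · rw [hGa]; exact smul_ne_zero (inv_ne_zero (pow_ne_zero _ hra)) hg1a
  · intro x
    by_cases hx : qf a x = 0
    · obtain ⟨m, rfl⟩ := qf_zero.1 hx
      have e1 : g (a + m) = g a := by simpa using h.1.int_mul m a
      have e2 : G (a + m) = G a := by simpa using hper.int_mul m a
      rw [hx, e1, e2, hGa, he.self_of_nhds]
      rcases n with _ | n <;> simp
    · simp [hG, hx]

lemma zeros_fin {g : ℝ → E} [CompleteSpace E] (h : APer g) (h0 : ∃ x, g x ≠ 0) :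
    {x ∈ Set.Ico (0:ℝ) 1 | g x = 0}.Finite := by
  have : {x | g x ≠ 0} ∈ codiscreteWithin (Set.Icc (0:ℝ) 1) := by
    rw [mem_codiscreteWithin]
    intro x hx
    rw [disjoint_principal_right]
    filter_upwards [aper_ne h h0 x] with y hy
    simp [hy]
  refine (isCompact_Icc.finite_sdiff_of_mem_codiscreteWithin this).subset ?_
  rintro x ⟨hx, hx2⟩
  exact ⟨⟨hx.1, hx.2.le⟩, by simpa using hx2⟩

lemma div_all [CompleteSpace E] : ∀ (N : ℕ) (g : ℝ → E), APer g → (∃ x, g x ≠ 0) →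
    {x ∈ Set.Ico (0:ℝ) 1 | g x = 0}.ncard = N →
    ∃ (k : ℝ → ℂ) (G : ℝ → E), APer k ∧ APer G ∧ (∀ x, G x ≠ 0) ∧ ∀ x, g x = k x • G x := by
  intro N
  induction N using Nat.strong_induction_on with
  | _ N ih =>
    intro g h h0 hN
    by_cases hz : ∃ a ∈ Set.Ico (0:ℝ) 1, g a = 0
    · obtain ⟨a, ha, hga⟩ := hz
      obtain ⟨n, G, hG, hGa, hgG⟩ := div_step h h0 a
      have hlt : {x ∈ Set.Ico (0:ℝ) 1 | G x = 0}.ncard < N := by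
        rw [← hN]
        apply Set.ncard_lt_ncard _ (zeros_fin h h0)
        refine ⟨fun x hx => ⟨hx.1, by rw [hgG, hx.2, smul_zero]⟩, fun hs => ?_⟩
        exact hGa (hs ⟨ha, hga⟩).2
      obtain ⟨k, G', hk, hG', hne, he⟩ := ih _ hlt G hG ⟨a, hGa⟩ rfl
      refine ⟨fun x => qf a x ^ n * k x, G', ⟨?_, ?_⟩, hG', hne, ?_⟩
      · intro x
        simp only [(qf_aper a).1 x, hk.1 x]
      · exact ((qf_aper a).2.pow n).mul hk.2
      · intro x; rw [hgG, he, smul_smul]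
    · refine ⟨fun _ => 1, g, ⟨fun _ => rfl, contDiff_const⟩, h, ?_, by simp⟩
      intro x hx
      apply hz
      refine ⟨Int.fract x, ⟨Int.fract_nonneg x, Int.fract_lt_one x⟩, ?_⟩
      rw [← hx, Int.fract]
      simpa using h.1.sub_zsmul_eq (x := x) ⌊x⌋

lemma cancel [CompleteSpace E] {k : ℝ → ℂ} {G : ℝ → E} (hk : APer k) (hG : APer G)
    (h0 : ∃ x, k x ≠ 0) (h : ∀ x, k x • G x = 0) (x : ℝ) : G x = 0 := by
  by_contra hx
  obtain ⟨y, hy⟩ := ((aper_ne hk h0 0).and (aper_ne hG ⟨x, hx⟩ 0)).exists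
  exact (smul_ne_zero hy.1 hy.2) (h y)
end

lemma div_unit {E : Type*} [NormedAddCommGroup E] [InnerProductSpace ℂ E] [CompleteSpace E]
    (g : ℝ → E) (h : APer g) (h0 : ∃ x, g x ≠ 0) :
    ∃ (k : ℝ → ℂ) (G : ℝ → E), APer k ∧ APer G ∧ (∀ x, ‖G x‖ = 1) ∧ (∃ x, k x ≠ 0) ∧
      ∀ x, g x = k x • G x := by
  obtain ⟨k, G, hk, hG, hne, he⟩ := div_all _ g h h0 rfl
  have hn : ContDiff ℝ ω (fun x => ((‖G x‖ : ℝ) : ℂ)) :=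
    Complex.ofRealCLM.contDiff.comp (hG.2.norm ℂ hne)
  have hnz : ∀ x, ((‖G x‖ : ℝ) : ℂ) ≠ 0 := fun x => by simpa using hne x
  refine ⟨fun x => k x * ‖G x‖, fun x => ((‖G x‖ : ℝ) : ℂ)⁻¹ • G x, ⟨?_, ?_⟩, ⟨?_, ?_⟩, ?_, ?_, ?_⟩
  · intro x; simp only [hk.1 x, hG.1 x]
  · exact hk.2.mul hn
  · intro x; simp only [hG.1 x]
  · exact (hn.inv hnz).smul hG.2
  · intro x
    rw [norm_smul]; simp [hne x]
  · obtain ⟨x, hx⟩ := h0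
    refine ⟨x, mul_ne_zero ?_ (hnz x)⟩
    intro hk0; apply hx; rw [he, hk0, zero_smul]
  · intro x
    rw [smul_smul, mul_assoc, mul_inv_cancel₀ (hnz x), mul_one, he]

lemma aper_ae {E : Type*} [NormedAddCommGroup E] [NormedSpace ℂ E] [CompleteSpace E]
    {g : ℝ → E} (h : APer g) (h0 : ∃ x, g x ≠ 0) :
    ∀ᵐ x ∂(volume.restrict (Set.Ioc (0:ℝ) 1)), g x ≠ 0 := by
  have hf := zeros_fin h h0
  have hf2 := (hf.insert 1).measure_zero (volume : Measure ℝ)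
  rw [ae_restrict_iff' measurableSet_Ioc]
  refine measure_mono_null ?_ hf2
  intro x hx
  simp only [Set.mem_compl_iff, Set.mem_ofPred_eq, Classical.not_imp, not_not] at hx
  obtain ⟨hx1, hx2⟩ := hx
  rcases eq_or_lt_of_le hx1.2 with h1 | h1
  · left; exact h1
  · right; exact ⟨⟨hx1.1.le, h1⟩, hx2⟩

lemma aper_int {g : ℝ → ℂ} (h : APer g) (a b : ℝ) :
    IntervalIntegrable (fun x => Real.log ‖g x‖) volume a b := by
  apply MeromorphicOn.intervalIntegrable_log_norm
  intro x _
  exact (h.an x).meromorphicAt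

lemma elog_eq {g : ℝ → ℂ} (h : APer g) (h0 : ∃ x, g x ≠ 0) :
    elogIntegral (volume.restrict (Set.Ioc (0:ℝ) 1)) (fun x => ‖g x‖)
      = ((∫ x in (0:ℝ)..1, Real.log ‖g x‖ : ℝ) : EReal) := by
  have hi : Integrable (fun x => Real.log ‖g x‖) (volume.restrict (Set.Ioc (0:ℝ) 1)) :=
    (intervalIntegrable_iff_integrableOn_Ioc_of_le zero_le_one).1 (aper_int h 0 1)
  have hae := aper_ae h h0
  have hp : (∫⁻ x, ENNReal.ofReal (Real.log ‖g x‖) ∂(volume.restrict (Set.Ioc (0:ℝ) 1))) ≠ ⊤ :=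
    hi.lintegral_lt_top.ne
  have hn : (∫⁻ x, ENNReal.ofReal (-Real.log ‖g x‖) ∂(volume.restrict (Set.Ioc (0:ℝ) 1))) ≠ ⊤ :=
    hi.neg.lintegral_lt_top.ne
  unfold elogIntegral
  rw [if_pos]
  · rw [intervalIntegral.integral_of_le zero_le_one,
      integral_eq_lintegral_pos_part_sub_lintegral_neg_part hi, EReal.coe_sub]
    congr 1
    · exact (EReal.coe_ennreal_toReal hp).symm
    · exact (EReal.coe_ennreal_toReal hn).symm
  · refine ⟨?_, hn⟩
    rw [ae_iff] at hae
    simpa using hae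

lemma sing_rank_one {d : ℕ} (M : Matrix (Fin d) (Fin d) ℂ) (s : ℂ)
    (u v : EuclideanSpace ℂ (Fin d)) (hu : ‖u‖ = 1) (hv : ‖v‖ = 1)
    (hM : ∀ i j, M i j = s * u i * star (v j)) : singVal 1 M = ‖s‖ := by
  have hMv : ∀ w : EuclideanSpace ℂ (Fin d), Matrix.toEuclideanLin M w = (s * inner ℂ v w) • u := by
    intro w
    ext i
    simp only [Matrix.toLpLin_apply, Matrix.mulVec, dotProduct, hM, PiLp.inner_apply,
      PiLp.smul_apply, smul_eq_mul, Finset.mul_sum, Finset.sum_mul]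
    refine Finset.sum_congr rfl fun j _ => ?_
    simp; ring
  have hno : ∀ w : EuclideanSpace ℂ (Fin d), ‖Matrix.toEuclideanLin M w‖ = ‖s‖ * ‖inner ℂ v w‖ := by
    intro w; rw [hMv, norm_smul, hu, mul_one, norm_mul]
  have hv0 : v ≠ 0 := by intro h; simp [h] at hv
  apply IsLUB.csSup_eq
  · constructor
    · rintro t ⟨V, hV, ht⟩
      have : ∃ w ∈ V, w ≠ 0 := by
        apply V.exists_mem_ne_zero_of_ne_bot
        rintro rfl
        simp at hV
      obtain ⟨w, hw, hw0⟩ := this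
      have h1 := ht w hw
      rw [hno] at h1
      have h2 : ‖inner ℂ v w‖ ≤ ‖w‖ := by simpa [hv] using norm_inner_le_norm (𝕜 := ℂ) v w
      have h3 : 0 < ‖w‖ := norm_pos_iff.2 hw0
      have : t * ‖w‖ ≤ ‖s‖ * ‖w‖ := h1.trans (mul_le_mul_of_nonneg_left h2 (norm_nonneg _))
      exact le_of_mul_le_mul_right this h3
    · intro b hb
      apply hb
      refine ⟨Submodule.span ℂ {v}, finrank_span_singleton hv0, ?_⟩
      intro w hw
      obtain ⟨c, rfl⟩ := Submodule.mem_span_singleton.1 hw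
      rw [hno, inner_smul_right, norm_smul, hv, norm_mul, inner_self_eq_norm_sq_to_K, hv]
      simp
  · refine ⟨‖s‖, Submodule.span ℂ {v}, finrank_span_singleton hv0, ?_⟩
    intro w hw
    obtain ⟨c, rfl⟩ := Submodule.mem_span_singleton.1 hw
    rw [hno, inner_smul_right, norm_smul, hv, norm_mul, inner_self_eq_norm_sq_to_K, hv]
    simp

lemma APer.mul {f g : ℝ → ℂ} (hf : APer f) (hg : APer g) : APer (fun x => f x * g x) :=
  ⟨fun x => by simp only [hf.1 x, hg.1 x], hf.2.mul hg.2⟩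

lemma APer.shift {E : Type*} [NormedAddCommGroup E] [NormedSpace ℂ E] {f : ℝ → E} (hf : APer f)
    (a : ℝ) : APer (fun x => f (x + a)) :=
  ⟨fun x => by show f (x + 1 + a) = f (x + a); rw [add_right_comm, hf.1 (x + a)], hf.2.comp (contDiff_id.add contDiff_const)⟩

lemma APer.inner {E : Type*} [NormedAddCommGroup E] [InnerProductSpace ℂ E] {f g : ℝ → E}
    (hf : APer f) (hg : APer g) : APer (fun x => inner ℂ (f x) (g x)) :=
  ⟨fun x => by simp only [hf.1 x, hg.1 x], hf.2.inner ℂ hg.2⟩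

lemma APer.mul_ne {f g : ℝ → ℂ} (hf : APer f) (hg : APer g) (h0 : ∃ x, f x ≠ 0)
    (h1 : ∃ x, g x ≠ 0) : ∃ x, f x * g x ≠ 0 := by
  obtain ⟨y, hy⟩ := ((aper_ne hf h0 0).and (aper_ne hg h1 0)).exists
  exact ⟨y, mul_ne_zero hy.1 hy.2⟩

lemma shift_ne {E : Type*} [Zero E] {f : ℝ → E} (h0 : ∃ x, f x ≠ 0) (a : ℝ) :
    ∃ x, f (x + a) ≠ 0 := by
  obtain ⟨x, hx⟩ := h0
  exact ⟨x - a, by simpa using hx⟩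

lemma log_mul_int {f g : ℝ → ℂ} (hf : APer f) (hg : APer g) (h0 : ∃ x, f x ≠ 0)
    (h1 : ∃ x, g x ≠ 0) : ∫ x in (0:ℝ)..1, Real.log ‖f x * g x‖ =
      (∫ x in (0:ℝ)..1, Real.log ‖f x‖) + ∫ x in (0:ℝ)..1, Real.log ‖g x‖ := by
  rw [← intervalIntegral.integral_add (aper_int hf 0 1) (aper_int hg 0 1)]
  rw [intervalIntegral.integral_of_le zero_le_one, intervalIntegral.integral_of_le zero_le_one]
  apply integral_congr_ae
  filter_upwards [aper_ae hf h0, aper_ae hg h1] with x hx hy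
  rw [norm_mul, Real.log_mul (norm_ne_zero_iff.2 hx) (norm_ne_zero_iff.2 hy)]

lemma log_shift_int {f : ℝ → ℂ} (hf : APer f) (a : ℝ) :
    ∫ x in (0:ℝ)..1, Real.log ‖f (x + a)‖ = ∫ x in (0:ℝ)..1, Real.log ‖f x‖ := by
  have hp : Function.Periodic (fun x => Real.log ‖f x‖) 1 := fun x => by simp only [hf.1 x]
  have := hp.intervalIntegral_add_eq a 0
  rw [intervalIntegral.integral_comp_add_right (fun x => Real.log ‖f x‖)]
  simpa [add_comm] using this

noncomputable def Fit (α : ℝ) (k f : ℝ → ℂ) : ℕ → ℝ → ℂ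
  | 0, x => k x
  | n + 1, x => Fit α k f n (x + α) * (f x * k x)

lemma Fit_spec (α : ℝ) {k f : ℝ → ℂ} (hk : APer k) (hf : APer f) (h0 : ∃ x, k x ≠ 0)
    (h1 : ∃ x, f x ≠ 0) (n : ℕ) : APer (Fit α k f n) ∧ (∃ x, Fit α k f n x ≠ 0) ∧
      ∫ x in (0:ℝ)..1, Real.log ‖Fit α k f n x‖ = (∫ x in (0:ℝ)..1, Real.log ‖k x‖) +
        n * ((∫ x in (0:ℝ)..1, Real.log ‖f x‖) + ∫ x in (0:ℝ)..1, Real.log ‖k x‖) := by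
  induction n with
  | zero => exact ⟨hk, h0, by simp [Fit]⟩
  | succ n ih =>
    obtain ⟨i1, i2, i3⟩ := ih
    refine ⟨(i1.shift α).mul (hf.mul hk), (i1.shift α).mul_ne (hf.mul hk) (shift_ne i2 α)
      (hf.mul_ne hk h1 h0), ?_⟩
    simp only [Fit]
    rw [log_mul_int (i1.shift α) (hf.mul hk) (shift_ne i2 α) (hf.mul_ne hk h1 h0),
      log_mul_int hf hk h1 h0, log_shift_int i1, i3]
    push_cast; ring

lemma matIter_eq {d : ℕ} (α : ℝ) (A : ℝ → Matrix (Fin d) (Fin d) ℂ) (k : ℝ → ℂ)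
    (u v : ℝ → EuclideanSpace ℂ (Fin d))
    (hA : ∀ x i j, A x i j = k x * u x i * star (v x j)) (n : ℕ) (x : ℝ) (i j : Fin d) :
    matIter α A (n + 1) x i j =
      Fit α k (fun x => inner ℂ (v (x + α)) (u x)) n x * u (x + n * α) i * star (v x j) := by
  induction n generalizing x i j with
  | zero => simp [matIter, Fit, hA]
  | succ n ih =>
    rw [matIter, Matrix.mul_apply]
    simp only [ih, hA, Fit, PiLp.inner_apply, RCLike.inner_apply]
    have : x + α + n * α = x + ((n + 1 : ℕ) : ℝ) * α := by push_cast; ring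
    rw [this]
    simp only [Finset.mul_sum, Finset.sum_mul]
    refine Finset.sum_congr rfl fun l _ => ?_
    simp only [starRingEnd_apply]
    ring

lemma f_zero {d : ℕ} (α : ℝ) (A : ℝ → Matrix (Fin d) (Fin d) ℂ) (k : ℝ → ℂ)
    (u v : ℝ → EuclideanSpace ℂ (Fin d)) (hk : APer k) (hu : APer u) (hv : APer v)
    (h0 : ∃ x, k x ≠ 0) (hu1 : ∀ x, ‖u x‖ = 1) (hv1 : ∀ x, ‖v x‖ = 1)
    (hA : ∀ x i j, A x i j = k x * u x i * star (v x j))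
    (hL1 : HasLyapunovExp α A 1 ⊥) (x : ℝ) : inner ℂ (v (x + α)) (u x) = 0 := by
  by_contra hx
  set f : ℝ → ℂ := fun x => inner ℂ (v (x + α)) (u x) with hf
  have hfa : APer f := (hv.shift α).inner hu
  have hs := Fit_spec α hk hfa h0 ⟨x, hx⟩
  set a := ∫ x in (0:ℝ)..1, Real.log ‖k x‖
  set b := (∫ x in (0:ℝ)..1, Real.log ‖f x‖) + a
  unfold HasLyapunovExp at hL1
  rw [← tendsto_add_atTop_iff_nat 1] at hL1
  have he : ∀ n : ℕ, ((((n + 1 : ℕ) : ℝ)⁻¹ : ℝ) : EReal)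
      * elogIntegral (volume.restrict (Set.Ioc (0:ℝ) 1))
          (fun x => singVal 1 (matIter α A (n + 1) x)) =
        (((((n + 1 : ℕ) : ℝ)⁻¹) * (a + n * b) : ℝ) : EReal) := by
    intro n
    have : (fun x => singVal 1 (matIter α A (n + 1) x)) = fun x => ‖Fit α k f n x‖ := by
      funext x
      exact sing_rank_one _ _ _ _ (hu1 _) (hv1 _) (matIter_eq α A k u v hA n x)
    rw [this, elog_eq (hs n).1 (hs n).2.1, (hs n).2.2, EReal.coe_mul]
  simp only [he] at hL1
  have hlim : Tendsto (fun n : ℕ => (((n + 1 : ℕ) : ℝ)⁻¹) * (a + n * b)) atTop (𝓝 b) := by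
    have h1 : Tendsto (fun n : ℕ => (((n : ℝ) + 1)⁻¹)) atTop (𝓝 0) := by
      simpa using tendsto_one_div_add_atTop_nhds_zero_nat (𝕜 := ℝ)
    have h2 : Tendsto (fun n : ℕ => (((n : ℝ) + 1)⁻¹) * (a - b) + b) atTop (𝓝 (0 * (a - b) + b)) :=
      (h1.mul_const _).add_const _
    rw [zero_mul, zero_add] at h2
    refine h2.congr fun n => ?_
    have : (n : ℝ) + 1 ≠ 0 := by positivity
    push_cast
    field_simp
    ring
  have h3 := tendsto_nhds_unique hL1 ((continuous_coe_real_ereal.tendsto b).comp hlim)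
  exact EReal.coe_ne_bot b h3.symm

lemma frame_ext {d : ℕ} : ∀ (N : ℕ) (S : Finset (Fin d)) (w : Fin d → ℝ → EuclideanSpace ℂ (Fin d)),
    (Sᶜ).card = N → (∀ i ∈ S, APer (w i)) →
    (∀ x, ∀ i ∈ S, ∀ j ∈ S, inner ℂ (w i x) (w j x) = if i = j then (1:ℂ) else 0) →
    ∃ w' : Fin d → ℝ → EuclideanSpace ℂ (Fin d), (∀ i ∈ S, w' i = w i) ∧ (∀ i, APer (w' i)) ∧
      ∀ x i j, inner ℂ (w' i x) (w' j x) = if i = j then (1:ℂ) else 0 := by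
  intro N
  induction N with
  | zero =>
    intro S w hN ha ho
    have hS : ∀ i, i ∈ S := by
      intro i
      have : Sᶜ = ∅ := Finset.card_eq_zero.1 hN
      by_contra hi
      have : i ∈ Sᶜ := Finset.mem_compl.2 hi
      simp_all
    exact ⟨w, fun _ _ => rfl, fun i => ha i (hS i), fun x i j => ho x i (hS i) j (hS j)⟩
  | succ N ih =>
    intro S w hN ha ho
    obtain ⟨i0, hi0⟩ : ∃ i, i ∈ Sᶜ := Finset.card_pos.1 (by omega)
    have hi0' : i0 ∉ S := Finset.mem_compl.1 hi0
    obtain ⟨z, hz0, hz⟩ : ∃ z : EuclideanSpace ℂ (Fin d), z ≠ 0 ∧ ∀ i ∈ S, inner ℂ (w i 0) z = 0 := by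
      set K := Submodule.span ℂ ((S.image (fun i => w i 0) : Finset (EuclideanSpace ℂ (Fin d))) :
        Set (EuclideanSpace ℂ (Fin d)))
      have h1 : Module.finrank ℂ K ≤ S.card :=
        (finrank_span_finset_le_card _).trans Finset.card_image_le
      have h2 : S.card < d := by
        have := Finset.card_lt_univ_of_notMem hi0'
        simpa using this
      have h3 : Kᗮ ≠ ⊥ := by
        intro hb
        rw [Submodule.orthogonal_eq_bot_iff] at hb
        rw [hb] at h1
        simp at h1
        omega
      obtain ⟨z, hz, hz0⟩ := Submodule.exists_mem_ne_zero_of_ne_bot h3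
      refine ⟨z, hz0, fun i hi => ?_⟩
      exact (Submodule.mem_orthogonal K z).1 hz _ (Submodule.subset_span (by
        simp only [Finset.coe_image]; exact ⟨i, hi, rfl⟩))
    set g : ℝ → EuclideanSpace ℂ (Fin d) := fun x => z - ∑ i ∈ S, (inner ℂ (w i x) z : ℂ) • w i x with hg
    have hcz : APer (fun _ : ℝ => z) := ⟨fun _ => rfl, contDiff_const⟩
    have hga : APer g := by
      constructor
      · intro x
        simp only [hg]
        congr 1
        exact Finset.sum_congr rfl fun i hi => by rw [(ha i hi).1 x]
      · exact contDiff_const.sub (ContDiff.sum fun i hi =>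
          (((ha i hi).inner hcz).2).smul (ha i hi).2)
    have hg0 : g 0 ≠ 0 := by
      have : g 0 = z := by
        simp only [hg]
        rw [Finset.sum_eq_zero fun i hi => by rw [hz i hi, zero_smul], sub_zero]
      rwa [this]
    have hgo : ∀ x, ∀ j ∈ S, inner ℂ (w j x) (g x) = 0 := by
      intro x j hj
      simp only [hg, inner_sub_right, inner_sum, inner_smul_right]
      rw [Finset.sum_congr rfl fun i hi => by rw [ho x j hj i hi]]
      simp [hj]
    obtain ⟨k, G, hk, hG, hG1, hk0, he⟩ := div_unit g hga ⟨0, hg0⟩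
    have hGo : ∀ j ∈ S, ∀ x, inner ℂ (w j x) (G x) = 0 := by
      intro j hj
      refine cancel hk ((ha j hj).inner hG) hk0 fun x => ?_
      have := hgo x j hj
      rw [he, inner_smul_right] at this
      exact this
    have hGo' : ∀ j ∈ S, ∀ x, inner ℂ (G x) (w j x) = 0 := fun j hj x =>
      inner_eq_zero_symm.1 (hGo j hj x)
    have hne : ∀ i ∈ S, i ≠ i0 := fun i hi h => hi0' (h ▸ hi)
    obtain ⟨w', h1, h2, h3⟩ := ih (insert i0 S) (Function.update w i0 G) (by
        rw [Finset.card_compl] at *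
        rw [Finset.card_insert_of_notMem hi0']
        omega) (by
        intro i hi
        rcases Finset.mem_insert.1 hi with rfl | hi
        · simpa using hG
        · rw [Function.update_of_ne (hne i hi)]; exact ha i hi) (by
        intro x i hi j hj
        rcases Finset.mem_insert.1 hi with rfl | hi' <;> rcases Finset.mem_insert.1 hj with rfl | hj'
        · simp [inner_self_eq_norm_sq_to_K, hG1]
        · rw [Function.update_of_ne (hne j hj'), Function.update_self, hGo' j hj',
            if_neg (hne j hj').symm]
        · rw [Function.update_of_ne (hne i hi'), Function.update_self, hGo i hi',
            if_neg (hne i hi')]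
        · rw [Function.update_of_ne (hne j hj'), Function.update_of_ne (hne i hi'), ho x i hi' j hj'])
    refine ⟨w', fun i hi => ?_, h2, h3⟩
    rw [h1 i (Finset.mem_insert_of_mem hi), Function.update_of_ne (hne i hi)]

lemma minors {d : ℕ} (M : Matrix (Fin d) (Fin d) ℂ) (h : M.rank ≤ 1) (i j k l : Fin d) :
    M i j * M k l = M i l * M k j := by
  rw [Matrix.rank, finrank_le_one_iff] at h
  obtain ⟨⟨v, hv⟩, h⟩ := h
  have hc : ∀ j, ∃ c : ℂ, ∀ i, M i j = c * v i := by
    intro j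
    obtain ⟨c, hc⟩ := h ⟨M.mulVecLin (Pi.single j 1), ⟨_, rfl⟩⟩
    refine ⟨c, fun i => ?_⟩
    have := congrFun (congrArg Subtype.val hc) i
    simpa using this.symm
  obtain ⟨c, hc1⟩ := hc j
  obtain ⟨c', hc2⟩ := hc l
  simp only [hc1, hc2]; ring

lemma aper_vec {d : ℕ} {f : ℝ → EuclideanSpace ℂ (Fin d)} (h : ∀ i, APer (fun x => f x i)) :
    APer f := by
  constructor
  · intro x
    ext i
    exact (h i).1 x
  · rw [contDiff_piLp]
    exact fun i => (h i).2

lemma aper_coord {d : ℕ} {f : ℝ → EuclideanSpace ℂ (Fin d)} (h : APer f) (i : Fin d) :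
    APer (fun x => f x i) :=
  ⟨fun x => by simp only [h.1 x], (contDiff_piLp 2).1 h.2 i⟩

lemma APer.conj {f : ℝ → ℂ} (h : APer f) : APer (fun x => star (f x)) :=
  ⟨fun x => by simp only [h.1 x], Complex.conjCLE.contDiff.comp h.2⟩

lemma rank_one_form {d : ℕ} (A : ℝ → Matrix (Fin d) (Fin d) ℂ)
    (hA : ∀ i j, APer (fun x => A x i j)) (hrank : ∀ x : ℝ, (A x).rank ≤ 1)
    (h0 : ∃ x i j, A x i j ≠ 0) :
    ∃ (k : ℝ → ℂ) (u v : ℝ → EuclideanSpace ℂ (Fin d)), APer k ∧ APer u ∧ APer v ∧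
      (∃ x, k x ≠ 0) ∧ (∀ x, ‖u x‖ = 1) ∧ (∀ x, ‖v x‖ = 1) ∧
      ∀ x i j, A x i j = k x * u x i * star (v x j) := by
  obtain ⟨x0, i0, j0, hx0⟩ := h0
  obtain ⟨h, u, hh, hu, hu1, hh0, he⟩ := div_unit
    (fun x => (WithLp.toLp 2 (fun i => A x i j0) : EuclideanSpace ℂ (Fin d)))
    (aper_vec fun i => hA i j0) ⟨x0, fun hz => hx0 (by
      have := congrArg (fun t : EuclideanSpace ℂ (Fin d) => t i0) hz
      simpa using this)⟩
  have he' : ∀ x i, A x i j0 = h x * u x i := by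
    intro x i
    have := congrArg (fun t : EuclideanSpace ℂ (Fin d) => t i) (he x)
    simpa using this
  have hprop : ∀ i j l x, A x i j * u x l - u x i * A x l j = 0 := by
    intro i j l
    have hap : APer (fun x => A x i j * u x l - u x i * A x l j) := by
      have p1 := (hA i j).mul (aper_coord hu l)
      have p2 := (aper_coord hu i).mul (hA l j)
      exact ⟨fun x => by simp only [(hA i j).1 x, (hA l j).1 x, hu.1 x], p1.2.sub p2.2⟩
    refine cancel hh hap hh0 fun x => ?_
    have := minors (A x) (hrank x) i j l j0
    rw [he', he'] at this
    rw [smul_eq_mul]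
    linear_combination this
  have hsum : ∀ x, ∑ l, u x l * star (u x l) = 1 := by
    intro x
    have h1 : (inner ℂ (u x) (u x) : ℂ) = 1 := by
      rw [inner_self_eq_norm_sq_to_K, hu1]; simp
    rw [PiLp.inner_apply] at h1
    exact h1
  have hform : ∀ x i j, A x i j = u x i * ∑ l, A x l j * star (u x l) := by
    intro x i j
    calc A x i j = A x i j * ∑ l, u x l * star (u x l) := by rw [hsum, mul_one]
      _ = _ := by
        rw [Finset.mul_sum, Finset.mul_sum]
        refine Finset.sum_congr rfl fun l _ => ?_
        linear_combination star (u x l) * hprop i j l x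
  have hbA : ∀ j, APer (fun x => star (∑ l, A x l j * star (u x l))) := by
    intro j
    apply APer.conj
    refine ⟨fun x => ?_, ?_⟩
    · exact Finset.sum_congr rfl fun l _ => by
        have := (hA l j).1 x
        simp only at this
        rw [this, hu.1 x]
    · exact ContDiff.sum fun l _ => ((hA l j).mul (aper_coord hu l).conj).2
  obtain ⟨k, v, hk, hv, hv1, hk0, hke⟩ := div_unit
    (fun x => (WithLp.toLp 2 (fun j => star (∑ l, A x l j * star (u x l))) : EuclideanSpace ℂ (Fin d)))
    (aper_vec hbA) ⟨x0, fun hz => hx0 (by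
      have := congrArg (fun t : EuclideanSpace ℂ (Fin d) => t j0) hz
      have h2 : star (∑ l, A x0 l j0 * star (u x0 l)) = 0 := this
      rw [hform, star_eq_zero.1 h2, mul_zero])⟩
  refine ⟨fun x => star (k x), u, v, hk.conj, hu, hv, ?_, hu1, hv1, ?_⟩
  · obtain ⟨y, hy⟩ := hk0
    exact ⟨y, star_ne_zero.2 hy⟩
  · intro x i j
    have h1 := congrArg (fun t : EuclideanSpace ℂ (Fin d) => t j) (hke x)
    have h2 : star (∑ l, A x l j * star (u x l)) = k x * v x j := h1
    have h3 : ∑ l, A x l j * star (u x l) = star (k x) * star (v x j) := by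
      rw [← star_star (∑ l, A x l j * star (u x l)), h2, star_mul, mul_comm]
    rw [hform, h3]; ring

/-- If `A` is analytic, 1-periodic, of rank at most one everywhere, and
`L₁(α,A) = -∞`, then there are an analytic 1-periodic function `c` and an analytic
1-periodic unitary `U` such that `U(x+α)* A(x) U(x)` has `c(x)` in position `(d-1, d)`
(1-indexed) and zeros elsewhere, i.e. it is the direct sum of a zero block and the `2×2`
block `[[0, c(x)], [0, 0]]`. -/
theorem stmt_7 {d : ℕ} (hd : 2 ≤ d) (α : ℝ) (A : ℝ → Matrix (Fin d) (Fin d) ℂ)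
    (hA : AnalyticPeriodicMat A)
    (hrank : ∀ x : ℝ, (A x).rank ≤ 1)
    (hL1 : HasLyapunovExp α A 1 ⊥) :
    ∃ (c : ℝ → ℂ) (U : ℝ → Matrix (Fin d) (Fin d) ℂ),
      Function.Periodic c 1 ∧ (∀ x : ℝ, AnalyticAt ℝ c x) ∧
      AnalyticPeriodicMat U ∧
      (∀ x : ℝ, U x ∈ Matrix.unitaryGroup (Fin d) ℂ) ∧
      ∀ (x : ℝ) (i j : Fin d),
        (star (U (x + α)) * A x * U x) i j
          = if (i : ℕ) = d - 2 ∧ (j : ℕ) = d - 1 then c x else 0 := by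
  have hA' : ∀ i j, APer (fun x => A x i j) := fun i j =>
    APer.ofAn (fun x => by simp only [hA.1 x]) (fun x => hA.2 x i j)
  by_cases h0 : ∃ x i j, A x i j ≠ 0
  swap
  · push Not at h0
    refine ⟨fun _ => 0, fun _ => 1, fun _ => rfl, fun _ => analyticAt_const,
      ⟨fun _ => rfl, fun _ _ _ => analyticAt_const⟩, fun _ => one_mem _, fun x i j => ?_⟩
    have : A x = 0 := by ext i j; exact h0 x i j
    simp [this]
  obtain ⟨k, u, v, hk, hu, hv, hk0, hu1, hv1, hform⟩ := rank_one_form A hA' hrank h0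
  have hf := f_zero α A k u v hk hu hv hk0 hu1 hv1 hform hL1
  set p : Fin d := ⟨d - 2, by omega⟩ with hp
  set q : Fin d := ⟨d - 1, by omega⟩ with hq
  have hpq : p ≠ q := by simp [hp, hq]; omega
  have huv : ∀ x, inner ℂ (v x) (u (x + -α)) = 0 := fun x => by simpa using hf (x + -α)
  have hvu : ∀ x, inner ℂ (u (x + -α)) (v x) = 0 := fun x => inner_eq_zero_symm.1 (huv x)
  obtain ⟨w, hw1, hw2, hw3⟩ := frame_ext _ {p, q}
    (fun i => if i = p then (fun x => u (x + -α)) else v) rfl (by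
      intro i _
      split_ifs
      · exact hu.shift _
      · exact hv) (by
      intro x i hi j hj
      simp only [Finset.mem_insert, Finset.mem_singleton] at hi hj
      rcases hi with rfl | rfl <;> rcases hj with rfl | rfl
      · simp [inner_self_eq_norm_sq_to_K, hu1]
      · simp [hpq, hpq.symm, hvu]
      · simp [hpq.symm, huv]
      · simp [inner_self_eq_norm_sq_to_K, hv1, hpq.symm])
  have hwp : ∀ x, w p x = u (x + -α) := fun x => by rw [hw1 p (by simp)]; simp
  have hwq : ∀ x, w q x = v x := fun x => by rw [hw1 q (by simp)]; simp [hpq.symm]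
  refine ⟨k, fun x => Matrix.of fun i j => w j x i, hk.1, hk.an, ⟨?_, ?_⟩, ?_, ?_⟩
  · intro x
    ext i j
    simp [(hw2 j).1 x]
  · intro x i j
    exact (aper_coord (hw2 j) i).an x
  · intro x
    rw [Matrix.mem_unitaryGroup_iff']
    ext i j
    have := hw3 x i j
    rw [PiLp.inner_apply] at this
    rw [Matrix.mul_apply, Matrix.one_apply, ← this]
    refine Finset.sum_congr rfl fun l _ => ?_
    simp [mul_comm]
  · intro x i j
    have e1 := hw3 (x + α) i p
    have e2 := hw3 x q j
    rw [hwp, add_neg_cancel_right, PiLp.inner_apply] at e1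
    rw [hwq, PiLp.inner_apply] at e2
    have : (star (Matrix.of fun i j => w j (x + α) i : Matrix (Fin d) (Fin d) ℂ) * A x *
        (Matrix.of fun i j => w j x i : Matrix (Fin d) (Fin d) ℂ)) i j =
        k x * (∑ l, inner ℂ (w i (x + α) l) (u x l)) * ∑ m, inner ℂ (v x m) (w j x m) := by
      simp only [Matrix.mul_apply, Finset.sum_mul, Finset.mul_sum]
      refine Finset.sum_congr rfl fun m _ => Finset.sum_congr rfl fun l _ => ?_
      simp [hform]; ring
    rw [this, e1, e2]
    have c1 : ((i : ℕ) = d - 2 ∧ (j : ℕ) = d - 1) ↔ (i = p ∧ q = j) := by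
      simp only [hp, hq, Fin.ext_iff]
      constructor <;> rintro ⟨h1, h2⟩ <;> exact ⟨h1, h2.symm⟩
    simp only [c1]
    by_cases h1 : i = p <;> by_cases h2 : q = j <;> simp [h1, h2]
end

section
/- Let M : ℝ → ℂ^{d×k} be real analytic and 1-periodic with max_x rank M(x) = k. Then there exists a real analytic 1-periodic map 𝓜 : ℝ → ℂ^{d×k} such that 𝓜(x)*𝓜(x) = I_k for all x (i.e. the columns of 𝓜(x) are orthonormal), the column span of M(x) is contained in the column span of 𝓜(x) for all x, and the two spans coincide whenever rank M(x) = k (which holds for all but finitely many x in a period). -/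
open MeasureTheory Filter Topology Matrix

namespace PerA

lemma finite_zeros {p : ℝ → ℝ} (hp : ∀ x, AnalyticAt ℝ p x) {x₁ : ℝ} (h1 : p x₁ ≠ 0) :
    {x ∈ Set.Ico (0:ℝ) 1 | p x = 0}.Finite := by
  by_contra hinf
  obtain ⟨z, hz, hacc⟩ := Set.Infinite.exists_accPt_of_subset_isCompact (K := Set.Icc (0:ℝ) 1)
    hinf isCompact_Icc (fun x hx => Set.Ico_subset_Icc_self hx.1)
  have hfr : ∃ᶠ y in 𝓝[≠] z, p y = 0 := by
    rw [accPt_iff_frequently_nhdsNE] at hacc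
    exact hacc.mono fun y hy => hy.2
  have hA : AnalyticOnNhd ℝ p Set.univ := fun x _ => hp x
  exact h1 (hA.eqOn_zero_of_preconnected_of_frequently_eq_zero isPreconnected_univ
    (Set.mem_univ z) hfr (Set.mem_univ x₁))

lemma order_ne_top {p : ℝ → ℝ} (hp : ∀ x, AnalyticAt ℝ p x) {x₁ : ℝ} (h1 : p x₁ ≠ 0) (x : ℝ) :
    analyticOrderAt p x ≠ ⊤ := by
  intro h
  rw [analyticOrderAt_eq_top] at h
  have hA : AnalyticOnNhd ℝ p Set.univ := fun x _ => hp x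
  exact h1 (hA.eqOn_zero_of_preconnected_of_eventuallyEq_zero isPreconnected_univ
    (Set.mem_univ x) h (Set.mem_univ x₁))

/-- number of zeros in a period -/
noncomputable def nu (p : ℝ → ℝ) : ℕ := ∑ᶠ x ∈ Set.Ico (0:ℝ) 1, analyticOrderNatAt p x

lemma fin_supp {p : ℝ → ℝ} (hp : ∀ x, AnalyticAt ℝ p x) {x₁ : ℝ} (h1 : p x₁ ≠ 0) :
    (Set.Ico (0:ℝ) 1 ∩ Function.support (analyticOrderNatAt p)).Finite :=
  (finite_zeros hp h1).subset fun _ hx =>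
    ⟨hx.1, apply_eq_zero_of_analyticOrderNatAt_ne_zero hx.2⟩

lemma nu_lt {p q r : ℝ → ℝ} (hq : ∀ x, AnalyticAt ℝ q x)
    (hr : ∀ x, AnalyticAt ℝ r x) (h : ∀ x, p x = r x * q x) {x₁ : ℝ} (h1 : p x₁ ≠ 0)
    {x₀ : ℝ} (h0 : x₀ ∈ Set.Ico (0:ℝ) 1) (hr0 : r x₀ = 0) : nu q < nu p := by
  have hpe : p = r * q := funext h
  have hr1 : r x₁ ≠ 0 := fun e => h1 (by simp [h, e])
  have hq1 : q x₁ ≠ 0 := fun e => h1 (by simp [h, e])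
  have key : nu p = nu r + nu q := by
    unfold nu
    rw [← finsum_mem_add_distrib' (fin_supp hr hr1) (fin_supp hq hq1)]
    refine finsum_mem_congr rfl fun x _ => ?_
    rw [hpe]
    exact analyticOrderNatAt_mul (hr x) (hq x) (order_ne_top hr hr1 x) (order_ne_top hq hq1 x)
  have hpos : 0 < nu r := by
    rw [Nat.pos_iff_ne_zero]
    intro hz
    have hle : analyticOrderNatAt r x₀ ≤ nu r := by
      have hf := fin_supp hr hr1
      unfold nu
      rw [finsum_mem_def]
      have := single_le_finsum (f := Set.indicator (Set.Ico (0:ℝ) 1) (analyticOrderNatAt r)) x₀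
        (by
          refine hf.subset ?_
          intro x hx
          rw [Set.support_indicator] at hx
          exact hx) (fun _ => Nat.zero_le _)
      rwa [Set.indicator_of_mem h0] at this
    have h00 : analyticOrderNatAt r x₀ = 0 := by omega
    have h3 := (hr x₀).analyticOrderAt_ne_zero.2 hr0
    rw [← Nat.cast_analyticOrderNatAt (order_ne_top hr hr1 x₀), h00] at h3
    exact h3 rfl
  omega

/-- the periodic exponential -/
noncomputable def ee (x : ℝ) : ℂ := Complex.exp (2 * Real.pi * Complex.I * x)

lemma ee_an (x : ℝ) : AnalyticAt ℝ ee x := by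
  have h1 : AnalyticAt ℝ (fun t : ℝ => (2 * Real.pi * Complex.I * (t : ℂ))) x :=
    analyticAt_const.mul (Complex.ofRealCLM.analyticAt x)
  have h2 : AnalyticAt ℝ Complex.exp (2 * Real.pi * Complex.I * (x : ℂ)) :=
    (analyticAt_cexp).restrictScalars
  exact AnalyticAt.fun_comp (g := Complex.exp) h2 h1

lemma ee_eq {x y : ℝ} (h : ee x = ee y) : ∃ n : ℤ, x = y + n := by
  unfold ee at h
  obtain ⟨n, hn⟩ := Complex.exp_eq_exp_iff_exists_int.1 h
  refine ⟨n, ?_⟩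
  have h2 : (2 * Real.pi * Complex.I : ℂ) ≠ 0 := Complex.two_pi_I_ne_zero
  have : (2 * Real.pi * Complex.I : ℂ) * x = (2 * Real.pi * Complex.I : ℂ) * (y + n) := by
    rw [hn]; ring
  have := mul_left_cancel₀ h2 this
  exact_mod_cast this

lemma ee_per : Function.Periodic ee 1 := by
  intro x
  unfold ee
  rw [Complex.exp_eq_exp_iff_exists_int]
  exact ⟨1, by push_cast; ring⟩

lemma ee_deriv (x : ℝ) : deriv ee x ≠ 0 := by
  have h : HasDerivAt ee (Complex.exp (2 * Real.pi * Complex.I * x) * (2 * Real.pi * Complex.I * 1)) x := by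
    unfold ee
    exact ((Complex.ofRealCLM.hasDerivAt (x := x)).const_mul (2 * Real.pi * Complex.I : ℂ)).cexp
  rw [h.deriv]
  simp

lemma dslope_an {f : ℝ → ℂ} {x : ℝ} (hf : AnalyticAt ℝ f x) : AnalyticAt ℝ (dslope f x) x := by
  obtain ⟨p, hp⟩ := hf
  exact ⟨_, hp.has_fpower_series_dslope_fslope⟩

lemma per_deriv {f : ℝ → ℂ} (hf : Function.Periodic f 1) : Function.Periodic (deriv f) 1 := by
  intro x
  rw [← deriv_comp_add_const, funext hf]

lemma divide {f : ℝ → ℂ} (hf : ∀ x, AnalyticAt ℝ f x) (hper : Function.Periodic f 1) {x₀ : ℝ}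
    (h0 : f x₀ = 0) : ∃ q : ℝ → ℂ, (∀ x, AnalyticAt ℝ q x) ∧ Function.Periodic q 1 ∧
      ∀ x, f x = (ee x - ee x₀) * q x := by
  classical
  have hz : ∀ x, ee x = ee x₀ → f x = 0 := by
    intro x hx
    obtain ⟨n, rfl⟩ := ee_eq hx
    have := hper.int_mul n x₀
    rw [mul_one] at this
    rw [this, h0]
  refine ⟨fun x => if ee x = ee x₀ then deriv f x / deriv ee x else f x / (ee x - ee x₀),
    ?_, ?_, ?_⟩
  · intro x
    by_cases hx : ee x = ee x₀
    · have hd : AnalyticAt ℝ (fun y => dslope f x y / dslope ee x y) x :=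
        (dslope_an (hf x)).div (dslope_an (ee_an x)) (by rw [dslope_same]; exact ee_deriv x)
      refine hd.congr ?_
      have hne : ∀ᶠ y in 𝓝 x, dslope ee x y ≠ 0 :=
        (dslope_an (ee_an x)).continuousAt.eventually_ne (by rw [dslope_same]; exact ee_deriv x)
      filter_upwards [hne] with y hy
      by_cases hyx : y = x
      · subst hyx; simp [hx]
      · have e1 : (y - x) • dslope ee x y = ee y - ee x₀ := by rw [sub_smul_dslope, hx]
        have e2 : (y - x) • dslope f x y = f y := by rw [sub_smul_dslope, hz x hx, sub_zero]
        have hyx' : ((y : ℂ) - x) ≠ 0 := by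
          rw [sub_ne_zero]; exact_mod_cast hyx
        have hne2 : ee y - ee x₀ ≠ 0 := by
          rw [← e1]; exact smul_ne_zero (sub_ne_zero.2 hyx) hy
        rw [if_neg (sub_ne_zero.1 hne2), ← e1, ← e2]
        simp only [Complex.real_smul, Complex.ofReal_sub]
        rw [mul_div_mul_left _ _ hyx']
    · have hd : AnalyticAt ℝ (fun y => f y / (ee y - ee x₀)) x :=
        (hf x).div ((ee_an x).sub analyticAt_const) (sub_ne_zero.2 hx)
      refine hd.congr ?_
      have : ∀ᶠ y in 𝓝 x, ee y ≠ ee x₀ := (ee_an x).continuousAt.eventually_ne hx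
      filter_upwards [this] with y hy
      rw [if_neg hy]
  · intro x
    simp only [ee_per x, hper x, per_deriv hper x, per_deriv ee_per x]
  · intro x
    by_cases hx : ee x = ee x₀
    · simp [hx, hz x hx]
    · simp only [if_neg hx]
      rw [mul_div_cancel₀ _ (sub_ne_zero.2 hx)]

lemma conj_an {f : ℝ → ℂ} {x : ℝ} (hf : AnalyticAt ℝ f x) : AnalyticAt ℝ (fun t => star (f t)) x :=
  AnalyticAt.fun_comp (g := fun z : ℂ => star z) (Complex.conjCLE.toContinuousLinearMap.analyticAt _) hf

lemma normSq_an {f : ℝ → ℂ} {x : ℝ} (hf : AnalyticAt ℝ f x) :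
    AnalyticAt ℝ (fun t => Complex.normSq (f t)) x := by
  have h1 : AnalyticAt ℝ (fun t => (f t).re) x := AnalyticAt.fun_comp (Complex.reCLM.analyticAt _) hf
  have h2 : AnalyticAt ℝ (fun t => (f t).im) x := AnalyticAt.fun_comp (Complex.imCLM.analyticAt _) hf
  simp only [Complex.normSq_apply]
  exact (h1.mul h1).add (h2.mul h2)

lemma det_an {k : ℕ} {A : ℝ → Matrix (Fin k) (Fin k) ℂ} {x : ℝ}
    (hA : ∀ i j, AnalyticAt ℝ (fun t => A t i j) x) : AnalyticAt ℝ (fun t => (A t).det) x := by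
  simp only [Matrix.det_apply']
  refine Finset.analyticAt_fun_sum _ fun σ _ => ?_
  exact analyticAt_const.mul (Finset.analyticAt_fun_prod _ fun i _ => hA _ _)

noncomputable def gd {d k : ℕ} (M : ℝ → Matrix (Fin d) (Fin k) ℂ) (x : ℝ) : ℝ :=
  Complex.normSq ((M x)ᴴ * M x).det

lemma gd_an {d k : ℕ} {M : ℝ → Matrix (Fin d) (Fin k) ℂ}
    (hM : ∀ x i j, AnalyticAt ℝ (fun t => M t i j) x) (x : ℝ) : AnalyticAt ℝ (gd M) x := by
  refine normSq_an (det_an fun i j => ?_)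
  simp only [Matrix.mul_apply, Matrix.conjTranspose_apply]
  exact Finset.analyticAt_fun_sum _ fun l _ => (conj_an (hM x l i)).mul (hM x l j)

open ComplexOrder in
lemma gd_ne {d k : ℕ} {M : ℝ → Matrix (Fin d) (Fin k) ℂ} {x : ℝ} :
    gd M x ≠ 0 ↔ (M x).rank = k := by
  unfold gd
  rw [Ne, Complex.normSq_eq_zero, ← Matrix.rank_conjTranspose_mul_self (M x)]
  constructor
  · intro h
    have := Matrix.rank_of_isUnit _ ((Matrix.isUnit_iff_isUnit_det _).2 (isUnit_iff_ne_zero.2 h))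
    simpa using this
  · intro h h0
    obtain ⟨v, hv, hv0⟩ := Matrix.exists_mulVec_eq_zero_iff.2 h0
    have hr := LinearMap.finrank_range_add_finrank_ker (Matrix.mulVecLin ((M x)ᴴ * M x))
    rw [← Matrix.rank, h] at hr
    simp only [Module.finrank_fin_fun] at hr
    have hk : Module.finrank ℂ (LinearMap.ker (Matrix.mulVecLin ((M x)ᴴ * M x))) = 0 := by omega
    rw [Submodule.finrank_eq_zero] at hk
    have : v ∈ LinearMap.ker (Matrix.mulVecLin ((M x)ᴴ * M x)) := by simpa using hv0
    rw [hk] at this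
    exact hv (by simpa using this)

open ComplexOrder in
lemma step {d k : ℕ} {M : ℝ → Matrix (Fin d) (Fin k) ℂ}
    (hper : Function.Periodic M 1)
    (hM : ∀ x i j, AnalyticAt ℝ (fun t => M t i j) x) {x₁ : ℝ} (h1 : gd M x₁ ≠ 0)
    {y : ℝ} (hy : gd M y = 0) :
    ∃ M' : ℝ → Matrix (Fin d) (Fin k) ℂ, Function.Periodic M' 1 ∧
      (∀ x i j, AnalyticAt ℝ (fun t => M' t i j) x) ∧ gd M' x₁ ≠ 0 ∧ nu (gd M') < nu (gd M) ∧
      ∀ x, ∃ A : Matrix (Fin k) (Fin k) ℂ, M x = M' x * A := by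
  classical
  obtain ⟨x₀, hx₀, h0⟩ : ∃ x₀ ∈ Set.Ico (0:ℝ) 1, gd M x₀ = 0 := by
    refine ⟨Int.fract y, ⟨Int.fract_nonneg y, Int.fract_lt_one y⟩, ?_⟩
    have := hper.sub_int_mul_eq (x := y) ⌊y⌋
    rw [mul_one] at this
    rw [← hy]
    unfold gd
    rw [Int.fract, this]
  have h0' := h0
  unfold gd at h0'
  rw [Complex.normSq_eq_zero] at h0'
  obtain ⟨v, hv, hv0⟩ := Matrix.exists_mulVec_eq_zero_iff.2 h0'
  rw [Matrix.conjTranspose_mul_self_mulVec_eq_zero] at hv0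
  obtain ⟨j, hj⟩ : ∃ j, v j ≠ 0 := by
    by_contra hcon
    push Not at hcon
    exact hv (funext hcon)
  have hq : ∀ i, ∃ q : ℝ → ℂ, (∀ x, AnalyticAt ℝ q x) ∧ Function.Periodic q 1 ∧
      ∀ x, (M x *ᵥ v) i = (ee x - ee x₀) * q x := by
    intro i
    refine divide (f := fun x => (M x *ᵥ v) i) ?_ ?_ ?_
    · intro x
      simp only [Matrix.mulVec, dotProduct]
      exact Finset.analyticAt_fun_sum _ fun l _ => (hM x i l).mul analyticAt_const
    · intro x
      simp only [hper x]
    · simp [hv0]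
  choose q hqa hqp hq using hq
  let M' : ℝ → Matrix (Fin d) (Fin k) ℂ := fun x => (M x).updateCol j (fun i => q i x)
  let w : ℝ → Fin k → ℂ := fun x l => if l = j then (ee x - ee x₀) / v j else -v l / v j
  let A : ℝ → Matrix (Fin k) (Fin k) ℂ := fun x => (1 : Matrix (Fin k) (Fin k) ℂ).updateCol j (w x)
  have hdet : ∀ x, (A x).det = (ee x - ee x₀) / v j := by
    intro x
    show ((1 : Matrix (Fin k) (Fin k) ℂ).updateCol j (w x)).det = _
    rw [← Matrix.cramer_apply, Matrix.cramer_one]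
    simp [w]
  have hMA : ∀ x, M x = M' x * A x := by
    intro x
    ext i l
    by_cases hl : l = j
    · subst hl
      have hs := hq i x
      simp only [Matrix.mulVec, dotProduct] at hs
      rw [← Finset.add_sum_erase _ _ (Finset.mem_univ l)] at hs
      rw [Matrix.mul_apply, ← Finset.add_sum_erase _ _ (Finset.mem_univ l)]
      have e : ∀ m ∈ Finset.univ.erase l, M' x i m * A x m l = -(M x i m * v m) / v l := by
        intro m hm
        have hm' := Finset.ne_of_mem_erase hm
        simp [M', A, w, hm']
        ring
      rw [Finset.sum_congr rfl e, ← Finset.sum_div, Finset.sum_neg_distrib]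
      simp only [M', A, w, Matrix.updateCol_self, if_true]
      rw [← mul_div_assoc, ← add_div, eq_div_iff hj]
      linear_combination hs
    · rw [Matrix.mul_apply, Finset.sum_eq_single l]
      · simp [M', A, hl]
      · intro m _ hm
        simp [A, hl, hm]
      · simp
  have hM'a : ∀ x i l, AnalyticAt ℝ (fun t => M' t i l) x := by
    intro x i l
    by_cases hl : l = j
    · subst hl
      simpa [M'] using hqa i x
    · simpa [M', hl] using hM x i l
  have hgd : ∀ x, gd M x = (Complex.normSq ((ee x - ee x₀) / v j) ^ 2) * gd M' x := by
    intro x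
    unfold gd
    rw [hMA x, Matrix.conjTranspose_mul]
    have : (A x)ᴴ * (M' x)ᴴ * (M' x * A x) = (A x)ᴴ * ((M' x)ᴴ * M' x) * A x := by
      simp only [Matrix.mul_assoc]
    rw [this, Matrix.det_mul, Matrix.det_mul, Matrix.det_conjTranspose, hdet]
    simp only [map_mul]
    have : Complex.normSq (star ((ee x - ee x₀) / v j)) = Complex.normSq ((ee x - ee x₀) / v j) :=
      Complex.normSq_conj _
    rw [this]; ring
  refine ⟨M', ?_, hM'a, ?_, ?_, fun x => ⟨A x, hMA x⟩⟩
  · intro x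
    simp only [M', hper x, fun i => hqp i x]
  · intro e
    exact h1 (by rw [hgd, e, mul_zero])
  · refine nu_lt (gd_an hM'a) (r := fun x => Complex.normSq ((ee x - ee x₀) / v j) ^ 2) ?_ hgd h1 hx₀ ?_
    · intro x
      exact (normSq_an (((ee_an x).sub analyticAt_const).div analyticAt_const hj)).pow 2
    · simp

lemma full {d k : ℕ} (n : ℕ) : ∀ {M : ℝ → Matrix (Fin d) (Fin k) ℂ}
    (_ : Function.Periodic M 1)
    (_ : ∀ x i j, AnalyticAt ℝ (fun t => M t i j) x) {x₁ : ℝ} (_ : gd M x₁ ≠ 0)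
    (_ : nu (gd M) = n),
    ∃ M' : ℝ → Matrix (Fin d) (Fin k) ℂ, Function.Periodic M' 1 ∧
      (∀ x i j, AnalyticAt ℝ (fun t => M' t i j) x) ∧ (∀ x, gd M' x ≠ 0) ∧
      ∀ x, ∃ A : Matrix (Fin k) (Fin k) ℂ, M x = M' x * A := by
  induction n using Nat.strong_induction_on with
  | _ n ih =>
    intro M hper hM x₁ h1 hn
    by_cases h : ∀ x, gd M x ≠ 0
    · exact ⟨M, hper, hM, h, fun x => ⟨1, by simp⟩⟩
    · push Not at h
      obtain ⟨y, hy⟩ := h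
      obtain ⟨M', hp', ha', h1', hlt, hA⟩ := step hper hM h1 hy
      obtain ⟨M'', hp'', ha'', h1'', hA'⟩ := ih _ (hn ▸ hlt) hp' ha' h1' rfl
      refine ⟨M'', hp'', ha'', h1'', fun x => ?_⟩
      obtain ⟨A, hA⟩ := hA x
      obtain ⟨B, hB⟩ := hA' x
      exact ⟨B * A, by rw [hA, hB, Matrix.mul_assoc]⟩

open InnerProductSpace

noncomputable def cols {d k : ℕ} (M : Matrix (Fin d) (Fin k) ℂ) (j : Fin k) :
    EuclideanSpace ℂ (Fin d) := WithLp.toLp 2 (fun i => M i j)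

lemma li {d k : ℕ} {M : Matrix (Fin d) (Fin k) ℂ} (h : M.rank = k) :
    LinearIndependent ℂ (cols M) := by
  have h1 : LinearIndependent ℂ M.col := by
    rw [linearIndependent_iff_card_eq_finrank_span]; unfold Set.finrank; rw [← Matrix.rank_eq_finrank_span_cols, h]
    simp
  exact h1.map' (WithLp.linearEquiv 2 ℂ (Fin d → ℂ)).symm.toLinearMap (LinearEquiv.ker _)

lemma nsq_an {d : ℕ} {g : ℝ → EuclideanSpace ℂ (Fin d)} {x : ℝ}
    (hg : ∀ i, AnalyticAt ℝ (fun t => g t i) x) : AnalyticAt ℝ (fun t => ‖g t‖ ^ 2) x := by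
  simp only [EuclideanSpace.norm_sq_eq, ← Complex.normSq_eq_norm_sq]
  exact Finset.analyticAt_fun_sum _ fun i _ => normSq_an (hg i)

lemma ofReal_an {f : ℝ → ℝ} {x : ℝ} (hf : AnalyticAt ℝ f x) :
    AnalyticAt ℝ (fun t => (f t : ℂ)) x :=
  AnalyticAt.fun_comp (Complex.ofRealCLM.analyticAt _) hf

lemma n_an {d : ℕ} {g : ℝ → EuclideanSpace ℂ (Fin d)} {x : ℝ}
    (hg : ∀ i, AnalyticAt ℝ (fun t => g t i) x) (h0 : g x ≠ 0) :
    AnalyticAt ℝ (fun t => ‖g t‖) x := by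
  have h1 : ‖g x‖ ^ 2 ≠ 0 := pow_ne_zero _ (norm_ne_zero_iff.2 h0)
  have h2 : AnalyticAt ℝ Real.sqrt (‖g x‖ ^ 2) := (Real.contDiffAt_sqrt h1).analyticAt
  have h3 := AnalyticAt.fun_comp (f := fun t => ‖g t‖ ^ 2) h2 (nsq_an hg)
  simpa [Real.sqrt_sq] using h3

lemma gs_an {d k : ℕ} {M : ℝ → Matrix (Fin d) (Fin k) ℂ}
    (hM : ∀ x i j, AnalyticAt ℝ (fun t => M t i j) x) (hr : ∀ x, (M x).rank = k) (x : ℝ)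
    (n : Fin k) : ∀ i, AnalyticAt ℝ (fun t => gramSchmidt ℂ (cols (M t)) n i) x := by
  induction n using WellFoundedLT.induction with
  | _ n ih =>
    intro i
    have e : ∀ t, gramSchmidt ℂ (cols (M t)) n i = M t i n - ∑ m ∈ Finset.Iio n,
        ((∑ l, M t l n * star (gramSchmidt ℂ (cols (M t)) m l)) /
          ((‖gramSchmidt ℂ (cols (M t)) m‖ ^ 2 : ℝ) : ℂ)) * gramSchmidt ℂ (cols (M t)) m i := by
      intro t
      have := congrArg (fun z : EuclideanSpace ℂ (Fin d) => z i)
        (gramSchmidt_def'' ℂ (cols (M t)) n)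
      simp only [PiLp.add_apply, WithLp.ofLp_sum, Finset.sum_apply, PiLp.smul_apply, smul_eq_mul,
        PiLp.inner_apply, RCLike.inner_apply] at this
      rw [eq_sub_iff_add_eq]
      refine Eq.trans ?_ this.symm
      push_cast
      rfl
    simp only [e]
    refine (hM x i n).sub (Finset.analyticAt_fun_sum _ fun m hm => ?_)
    have hm' := ih m (Finset.mem_Iio.1 hm)
    refine AnalyticAt.mul (AnalyticAt.div ?_ ?_ ?_) (hm' i)
    · exact Finset.analyticAt_fun_sum _ fun l _ => (hM x l n).mul (conj_an (hm' l))
    · exact ofReal_an (nsq_an hm')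
    · have := gramSchmidt_ne_zero m (li (hr x))
      exact_mod_cast pow_ne_zero 2 (norm_ne_zero_iff.2 this)

noncomputable def NN {d k : ℕ} (M : Matrix (Fin d) (Fin k) ℂ) : Matrix (Fin d) (Fin k) ℂ :=
  Matrix.of fun i j => gramSchmidtNormed ℂ (cols M) j i

lemma NN_an {d k : ℕ} {M : ℝ → Matrix (Fin d) (Fin k) ℂ}
    (hM : ∀ x i j, AnalyticAt ℝ (fun t => M t i j) x) (hr : ∀ x, (M x).rank = k) (x : ℝ)
    (i : Fin d) (j : Fin k) : AnalyticAt ℝ (fun t => NN (M t) i j) x := by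
  have h0 := gramSchmidt_ne_zero j (li (hr x))
  have h : AnalyticAt ℝ (fun t => ((‖gramSchmidt ℂ (cols (M t)) j‖ : ℝ) : ℂ)⁻¹ *
      gramSchmidt ℂ (cols (M t)) j i) x :=
    ((ofReal_an (n_an (gs_an hM hr x j) h0)).inv
      (by exact_mod_cast (norm_ne_zero_iff.2 h0))).mul (gs_an hM hr x j i)
  exact h

lemma NN_on {d k : ℕ} {M : Matrix (Fin d) (Fin k) ℂ} (hr : M.rank = k) :
    (NN M)ᴴ * NN M = 1 := by
  have h := gramSchmidtNormed_orthonormal (li hr)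
  rw [orthonormal_iff_ite] at h
  ext a b
  rw [Matrix.one_apply, ← h a b, Matrix.mul_apply]
  simp only [PiLp.inner_apply, RCLike.inner_apply, Matrix.conjTranspose_apply, NN, Matrix.of_apply]
  exact Finset.sum_congr rfl fun i _ => mul_comm _ _

lemma NN_range {d k : ℕ} (M : Matrix (Fin d) (Fin k) ℂ) :
    LinearMap.range (Matrix.mulVecLin M) ≤ LinearMap.range (Matrix.mulVecLin (NN M)) := by
  rw [Matrix.range_mulVecLin, Matrix.range_mulVecLin, Submodule.span_le]
  rintro _ ⟨j, rfl⟩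
  have h : cols M j ∈ Submodule.span ℂ (Set.range (gramSchmidtNormed ℂ (cols M))) := by
    rw [span_gramSchmidtNormed_range, span_gramSchmidt]
    exact Submodule.subset_span ⟨j, rfl⟩
  have h2 := Submodule.mem_map_of_mem (f := (WithLp.linearEquiv 2 ℂ (Fin d → ℂ)).toLinearMap) h
  rw [Submodule.map_span, ← Set.range_comp] at h2
  exact h2

end PerA

/-- If `M : ℝ → ℂ^{d×k}` is real analytic, 1-periodic and of maximal rank
`k` somewhere (hence everywhere rank `≤ k`), then there is a real analytic 1-periodic
`N : ℝ → ℂ^{d×k}` with orthonormal columns (`N(x)*N(x) = 1`), whose column span contains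
the column span of `M(x)` for all `x`, with equality whenever `rank M(x) = k`; moreover
`rank M(x) = k` holds for all but finitely many `x` in a period. -/
theorem stmt_11 {d k : ℕ} (M : ℝ → Matrix (Fin d) (Fin k) ℂ)
    (hM_per : Function.Periodic M 1)
    (hM_an : ∀ (x : ℝ) (i : Fin d) (j : Fin k), AnalyticAt ℝ (fun t => M t i j) x)
    (hM_rank : ∃ x : ℝ, (M x).rank = k) :
    {x ∈ Set.Ico (0:ℝ) 1 | (M x).rank ≠ k}.Finite ∧
    ∃ N : ℝ → Matrix (Fin d) (Fin k) ℂ,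
      Function.Periodic N 1 ∧
      (∀ (x : ℝ) (i : Fin d) (j : Fin k), AnalyticAt ℝ (fun t => N t i j) x) ∧
      (∀ x : ℝ, (N x)ᴴ * N x = 1) ∧
      (∀ x : ℝ, LinearMap.range (Matrix.mulVecLin (M x))
          ≤ LinearMap.range (Matrix.mulVecLin (N x))) ∧
      (∀ x : ℝ, (M x).rank = k →
        LinearMap.range (Matrix.mulVecLin (M x))
          = LinearMap.range (Matrix.mulVecLin (N x))) := by
  have hre : ∀ x, PerA.gd M x ≠ 0 ↔ (M x).rank = k := fun x => PerA.gd_ne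
  obtain ⟨x₁, hx₁⟩ := hM_rank
  have h1 := (hre x₁).2 hx₁
  refine ⟨?_, ?_⟩
  · refine (PerA.finite_zeros (PerA.gd_an hM_an) h1).subset fun x hx => ⟨hx.1, ?_⟩
    by_contra hne
    exact hx.2 ((hre x).1 hne)
  · obtain ⟨M', hp, ha, hg, hA⟩ := PerA.full _ hM_per hM_an h1 rfl
    have hr : ∀ x, (M' x).rank = k := fun x => PerA.gd_ne.1 (hg x)
    have hle : ∀ x : ℝ, LinearMap.range (Matrix.mulVecLin (M x))
          ≤ LinearMap.range (Matrix.mulVecLin (PerA.NN (M' x))) := by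
      intro x
      refine le_trans ?_ (PerA.NN_range (M' x))
      obtain ⟨A, hA⟩ := hA x
      rw [hA, Matrix.mulVecLin_mul]
      exact LinearMap.range_comp_le_range _ _
    refine ⟨fun x => PerA.NN (M' x), fun x => by simp only [hp x], PerA.NN_an ha hr,
      fun x => PerA.NN_on (hr x), hle, fun x hx => ?_⟩
    refine Submodule.eq_of_le_of_finrank_le (hle x) ?_
    have h2 : (PerA.NN (M' x)).rank ≤ k := by
      simpa using Matrix.rank_le_card_width (PerA.NN (M' x))
    have h3 := h2.trans hx.ge
    exact h3
end

section
/- Let A : ℝ → ℂ^{d×d} be real analytic and 1-periodic, and let P : ℝ → ℂ^{d×d} be real analytic and 1-periodic with each P(x) an orthogonal projection (P(x)² = P(x) = P(x)*) of rank k. If the dimension of the image subspace A(x)(ran P(x)) ⊆ ℂ^d is constant in x, then the map assigning to x the orthogonal projection onto A(x)(ran P(x)) is real analytic and 1-periodic. -/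
open MeasureTheory Filter Topology Matrix

/-- `P` is an orthogonal projection matrix (w.r.t. the Hermitian inner product). -/
def IsOrthProj {d : ℕ} (P : Matrix (Fin d) (Fin d) ℂ) : Prop :=
  P * P = P ∧ Pᴴ = P

/-- The range (column span) of a matrix, as a subspace of `ℂ^d`. -/
noncomputable def matRange {d e : ℕ} (M : Matrix (Fin d) (Fin e) ℂ) : Submodule ℂ (Fin d → ℂ) :=
  LinearMap.range M.mulVecLin

def AnM {d e : ℕ} (A : ℝ → Matrix (Fin d) (Fin e) ℂ) (x : ℝ) : Prop :=
  ∀ (i : Fin d) (j : Fin e), AnalyticAt ℝ (fun t => A t i j) x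

lemma AnM.mul {d e f : ℕ} {A : ℝ → Matrix (Fin d) (Fin e) ℂ} {B : ℝ → Matrix (Fin e) (Fin f) ℂ}
    {x : ℝ} (hA : AnM A x) (hB : AnM B x) : AnM (fun t => A t * B t) x := by
  intro i j
  simp only [Matrix.mul_apply]
  exact Finset.analyticAt_fun_sum _ (fun l _ => (hA i l).mul (hB l j))

lemma AnM.const {d e : ℕ} (S : Matrix (Fin d) (Fin e) ℂ) (x : ℝ) : AnM (fun _ => S) x :=
  fun _ _ => analyticAt_const

lemma AnM.conj {d e : ℕ} {A : ℝ → Matrix (Fin d) (Fin e) ℂ}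
    {x : ℝ} (hA : AnM A x) : AnM (fun t => (A t)ᴴ) x := by
  intro i j
  have h := (Complex.conjCLE.toContinuousLinearMap.analyticAt (A x j i)).comp
    (f := fun t => A t j i) (hA j i)
  exact h

lemma AnM.det {d : ℕ} {A : ℝ → Matrix (Fin d) (Fin d) ℂ}
    {x : ℝ} (hA : AnM A x) : AnalyticAt ℝ (fun t => (A t).det) x := by
  simp only [Matrix.det_apply']
  exact Finset.analyticAt_fun_sum _ (fun l _ => analyticAt_const.mul
    (Finset.analyticAt_fun_prod _ (fun i _ => hA _ _)))

lemma AnM.inv {d : ℕ} {A : ℝ → Matrix (Fin d) (Fin d) ℂ}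
    {x : ℝ} (hA : AnM A x) (hd : (A x).det ≠ 0) : AnM (fun t => (A t)⁻¹) x := by
  intro i j
  simp only [Matrix.inv_def, Matrix.smul_apply, Ring.inverse_eq_inv', smul_eq_mul,
    Matrix.adjugate_apply]
  refine (hA.det.inv hd).mul (AnM.det (A := fun t => (A t).updateRow j (Pi.single i 1)) ?_)
  intro a b
  by_cases h : a = j
  · subst h
    simp only [Matrix.updateRow_self]
    exact analyticAt_const
  · simp only [Matrix.updateRow_ne h]
    exact hA a b

open scoped ComplexOrder in
lemma exists_frame {d m : ℕ} (N : Matrix (Fin d) (Fin d) ℂ)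
    (h : Module.finrank ℂ (matRange N) = m) :
    ∃ S : Matrix (Fin d) (Fin m) ℂ, ((N * S)ᴴ * (N * S)).det ≠ 0 := by
  let b := Module.finBasisOfFinrankEq ℂ (matRange N) h
  have hb : ∀ i, ∃ v, N.mulVecLin v = (b i : Fin d → ℂ) := fun i => (b i).2
  choose v hv using hb
  refine ⟨Matrix.of (fun i j => v j i), ?_⟩
  have hcol : (N * Matrix.of (fun i j => v j i)).col = fun i => (b i : Fin d → ℂ) := by
    funext j
    rw [← hv j]
    rfl
  have hli : LinearIndependent ℂ (N * Matrix.of (fun i j => v j i)).col := by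
    rw [hcol]
    exact b.linearIndependent.map' (matRange N).subtype (Submodule.ker_subtype _)
  rw [← Matrix.mulVec_injective_iff] at hli
  generalize N * Matrix.of (fun i j => v j i) = C at hli
  rw [← isUnit_iff_ne_zero, ← Matrix.isUnit_iff_isUnit_det, ← Matrix.mulVec_injective_iff_isUnit]
  have := Matrix.ker_mulVecLin_conjTranspose_mul_self C
  have h2 : LinearMap.ker C.mulVecLin = ⊥ := LinearMap.ker_eq_bot.2 hli
  rw [h2] at this
  exact LinearMap.ker_eq_bot.1 this

lemma frame_proj {d m : ℕ} (C : Matrix (Fin d) (Fin m) ℂ) (h : (Cᴴ * C).det ≠ 0) :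
    IsOrthProj (C * (Cᴴ * C)⁻¹ * Cᴴ) ∧ matRange (C * (Cᴴ * C)⁻¹ * Cᴴ) = matRange C ∧
      Module.finrank ℂ (matRange C) = m := by
  have hu : IsUnit (Cᴴ * C).det := isUnit_iff_ne_zero.2 h
  have hQC : C * (Cᴴ * C)⁻¹ * Cᴴ * C = C := by
    rw [Matrix.mul_assoc, Matrix.mul_assoc, Matrix.nonsing_inv_mul _ hu, Matrix.mul_one]
  refine ⟨⟨?_, ?_⟩, ?_, ?_⟩
  · rw [← Matrix.mul_assoc, ← Matrix.mul_assoc, hQC]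
  · simp [Matrix.conjTranspose_nonsing_inv, Matrix.mul_assoc]
  · apply le_antisymm
    · rintro _ ⟨v, rfl⟩
      refine ⟨((Cᴴ * C)⁻¹ * Cᴴ) *ᵥ v, ?_⟩
      simp [Matrix.mul_assoc]
    · rintro _ ⟨v, rfl⟩
      refine ⟨C *ᵥ v, ?_⟩
      simp only [Matrix.mulVecLin_apply, Matrix.mulVec_mulVec]
      rw [hQC]
  · have hi : Function.Injective C.mulVecLin := by
      intro v w hvw
      have h1 := congrArg (fun z => ((Cᴴ * C)⁻¹ * Cᴴ) *ᵥ z) hvw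
      simpa [Matrix.mulVecLin_apply, Matrix.mulVec_mulVec, Matrix.mul_assoc,
        Matrix.nonsing_inv_mul _ hu] using h1
    rw [matRange, LinearMap.finrank_range_of_inj hi]
    simp

lemma proj_absorb {d : ℕ} {Q R : Matrix (Fin d) (Fin d) ℂ} (hQ : IsOrthProj Q)
    (h : matRange R ≤ matRange Q) : Q * R = R := by
  apply Matrix.ext_of_mulVec_single
  intro i
  obtain ⟨w, hw⟩ := h (⟨Pi.single i 1, rfl⟩ : R.mulVecLin (Pi.single i 1) ∈ matRange R)
  simp only [Matrix.mulVecLin_apply] at hw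
  rw [← Matrix.mulVec_mulVec, ← hw, Matrix.mulVec_mulVec, hQ.1]

lemma proj_unique {d : ℕ} {Q R : Matrix (Fin d) (Fin d) ℂ} (hQ : IsOrthProj Q)
    (hR : IsOrthProj R) (h : matRange Q = matRange R) : Q = R := by
  have h1 := proj_absorb hQ h.ge
  have h2 := proj_absorb hR h.le
  have h3 := congrArg Matrix.conjTranspose h2
  rw [Matrix.conjTranspose_mul, hQ.2, hR.2, h1] at h3
  exact h3.symm

theorem stmt_12 {d k : ℕ} (A P : ℝ → Matrix (Fin d) (Fin d) ℂ)
    (hA : AnalyticPeriodicMat A)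
    (hP : AnalyticPeriodicMat P)
    (hPproj : ∀ x : ℝ, IsOrthProj (P x))
    (hPrank : ∀ x : ℝ, (P x).rank = k)
    (hconst : ∃ m : ℕ, ∀ x : ℝ,
      Module.finrank ℂ ((matRange (P x)).map (A x).mulVecLin) = m) :
    ∃ Q : ℝ → Matrix (Fin d) (Fin d) ℂ,
      AnalyticPeriodicMat Q ∧
      ∀ x : ℝ, IsOrthProj (Q x) ∧
        matRange (Q x) = (matRange (P x)).map (A x).mulVecLin := by
  obtain ⟨m, hm⟩ := hconst
  have hr : ∀ x, (matRange (P x)).map (A x).mulVecLin = matRange (A x * P x) := by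
    intro x
    rw [matRange, matRange, Matrix.mulVecLin_mul, LinearMap.range_comp]
  replace hm : ∀ x, Module.finrank ℂ (matRange (A x * P x)) = m := by
    intro x
    rw [← hr x]
    exact hm x
  simp only [hr]
  have key : ∀ (S : Matrix (Fin d) (Fin m) ℂ) (x : ℝ),
      ((A x * P x * S)ᴴ * (A x * P x * S)).det ≠ 0 →
      matRange (A x * P x * S) = matRange (A x * P x) := by
    intro S x h
    apply Submodule.eq_of_le_of_finrank_eq
    · rintro _ ⟨v, rfl⟩
      refine ⟨S *ᵥ v, ?_⟩
      simp
    · rw [hm, (frame_proj _ h).2.2]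
  have hex : ∀ x, ∃ Q, IsOrthProj Q ∧ matRange Q = matRange (A x * P x) := by
    intro x
    obtain ⟨S, hS⟩ := exists_frame _ (hm x)
    have := frame_proj _ hS
    exact ⟨_, this.1, this.2.1.trans (key S x hS)⟩
  choose Q hQ using hex
  refine ⟨Q, ⟨?_, ?_⟩, hQ⟩
  · intro x
    apply proj_unique (hQ _).1 (hQ _).1
    rw [(hQ _).2, (hQ _).2, hA.1 x, hP.1 x]
  · intro x
    obtain ⟨S, hS⟩ := exists_frame _ (hm x)
    have hC : AnM (fun t => A t * P t * S) x :=
      (AnM.mul (hA.2 x) (hP.2 x)).mul (AnM.const S x)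
    have hG := hC.conj.mul hC
    have hR := (hC.mul (hG.inv hS)).mul hC.conj
    have hev := hG.det.continuousAt.eventually_ne hS
    intro i j
    refine (hR i j).congr ?_
    filter_upwards [hev] with t ht
    have := frame_proj _ ht
    rw [proj_unique (hQ t).1 this.1 ((hQ t).2.trans ((key S t ht).symm.trans this.2.1.symm))]
end

section
/- Let U ⊆ ℝ^ℓ be open and connected and let g : U → ℂ be real analytic and not identically zero. Then ln|g| is locally Lebesgue integrable on U; that is, every point x₀ ∈ U has a neighborhood V ⊆ U with ∫_V |ln|g(x)|| dx < ∞ (in particular ∫_V ln|g(x)| dx > −∞). -/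
open MeasureTheory Filter Topology

/-- Sublevel set estimate in one dimension. -/
theorem aux_sublevel (k : ℕ) : ∃ C : ℝ, 0 ≤ C ∧ ∀ (F : ℕ → ℝ → ℝ) (J : Set ℝ) (c η : ℝ),
    J.OrdConnected → 0 < c → 0 < η →
    (∀ i < k, ∀ t ∈ J, HasDerivAt (F i) (F (i+1) t) t) → (∀ t ∈ J, c ≤ F k t) →
    volume {t | t ∈ J ∧ |F 0 t| < c * η ^ k} ≤ ENNReal.ofReal (C * η) := by
  induction k with
  | zero =>
    refine ⟨0, le_rfl, ?_⟩
    intro F J c η hJ hc hη hF hk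
    have : {t | t ∈ J ∧ |F 0 t| < c * η ^ 0} = ∅ := by
      ext t
      simp only [Set.mem_ofPred_eq, Set.mem_empty_iff_false, iff_false, not_and, not_lt, pow_zero,
        mul_one]
      intro ht
      exact (hk t ht).trans (le_abs_self _)
    rw [this]; simp
  | succ k ih =>
    obtain ⟨C, hC, ih⟩ := ih
    refine ⟨C + C + 2, by positivity, ?_⟩
    intro F J c η hJ hc hη hF hk
    have slope : ∀ s ∈ J, ∀ t ∈ J, s < t → c * (t - s) ≤ F k t - F k s := by
      intro s hs t ht hst
      have hsub : Set.Icc s t ⊆ J := hJ.out hs ht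
      obtain ⟨z, hz, hz2⟩ := exists_hasDerivAt_eq_slope (F k) (F (k+1)) hst
        (fun u hu => (hF k (by omega) u (hsub hu)).continuousAt.continuousWithinAt)
        (fun u hu => hF k (by omega) u (hsub (Set.Ioo_subset_Icc_self hu)))
      have h1 := hk z (hsub (Set.Ioo_subset_Icc_self hz))
      rw [hz2, le_div_iff₀ (by linarith)] at h1
      exact h1
    have mono : ∀ s ∈ J, ∀ t ∈ J, s ≤ t → F k s ≤ F k t := by
      intro s hs t ht hst
      rcases hst.eq_or_lt with rfl | hst
      · exact le_rfl
      · have := slope s hs t ht hst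
        nlinarith [mul_pos hc (sub_pos.2 hst)]
    have hcη : 0 < c * η := by positivity
    have h1 := ih F {t | t ∈ J ∧ c * η ≤ F k t} (c * η) η
      ⟨fun s hs t ht u hu => ⟨hJ.out hs.1 ht.1 hu,
        hs.2.trans (mono s hs.1 u (hJ.out hs.1 ht.1 hu) hu.1)⟩⟩ hcη hη
      (fun i hi t ht => hF i (by omega) t ht.1) (fun t ht => ht.2)
    have h2 := ih (fun i t => - F i t) {t | t ∈ J ∧ c * η ≤ - F k t} (c * η) η
      ⟨fun s hs t ht u hu => ⟨hJ.out hs.1 ht.1 hu, by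
        have := mono u (hJ.out hs.1 ht.1 hu) t ht.1 hu.2
        have := ht.2
        linarith⟩⟩ hcη hη
      (fun i hi t ht => (hF i (by omega) t ht.1).neg) (fun t ht => ht.2)
    have h3 : volume {t | t ∈ J ∧ |F k t| < c * η} ≤ ENNReal.ofReal (2 * η) := by
      refine (Real.volume_le_diam _).trans (Metric.ediam_le_of_forall_dist_le ?_)
      have key : ∀ s ∈ {t | t ∈ J ∧ |F k t| < c * η}, ∀ t ∈ {t | t ∈ J ∧ |F k t| < c * η},
          s < t → t - s ≤ 2 * η := by
        intro s hs t ht hst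
        have a := slope s hs.1 t ht.1 hst
        have b := abs_lt.1 hs.2
        have d := abs_lt.1 ht.2
        have : c * (t - s) ≤ c * (2 * η) := by linarith [b.1, d.2]
        exact le_of_mul_le_mul_left this hc
      intro s hs t ht
      rw [Real.dist_eq]
      rcases lt_trichotomy s t with h | h | h
      · rw [abs_sub_comm, abs_of_pos (sub_pos.2 h)]; exact key s hs t ht h
      · subst h; simp; positivity
      · rw [abs_of_pos (sub_pos.2 h)]; exact key t ht s hs h
    have hsub : {t | t ∈ J ∧ |F 0 t| < c * η ^ (k+1)} ⊆
        ({t | t ∈ {t | t ∈ J ∧ c * η ≤ F k t} ∧ |F 0 t| < c * η * η ^ k} ∪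
        {t | t ∈ {t | t ∈ J ∧ c * η ≤ - F k t} ∧ |(-F 0 t)| < c * η * η ^ k}) ∪
        {t | t ∈ J ∧ |F k t| < c * η} := by
      rintro t ⟨ht, ht2⟩
      have e : c * η ^ (k+1) = c * η * η ^ k := by ring
      rw [e] at ht2
      by_cases hh : |F k t| < c * η
      · exact Or.inr ⟨ht, hh⟩
      · left
        rcases le_abs.1 (not_lt.1 hh) with h | h
        · exact Or.inl ⟨⟨ht, h⟩, ht2⟩
        · exact Or.inr ⟨⟨ht, h⟩, by rwa [abs_neg]⟩
    calc _ ≤ _ := measure_mono hsub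
      _ ≤ _ := measure_union_le _ _
      _ ≤ _ := add_le_add (measure_union_le _ _) le_rfl
      _ ≤ ENNReal.ofReal (C * η) + ENNReal.ofReal (C * η) + ENNReal.ofReal (2 * η) :=
        add_le_add (add_le_add h1 h2) h3
      _ = _ := by
        rw [← ENNReal.ofReal_add (by positivity) (by positivity),
          ← ENNReal.ofReal_add (by positivity) (by positivity)]
        congr 1; ring

/-- Iterated directional derivatives. -/
noncomputable def auxD {E : Type*} [NormedAddCommGroup E] [NormedSpace ℝ E] (f : E → ℝ) (v : E) :
    ℕ → E → ℝ
  | 0 => f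
  | (n+1) => fun x => fderiv ℝ (auxD f v n) x v

theorem auxD_analytic {E : Type*} [NormedAddCommGroup E] [NormedSpace ℝ E] {f : E → ℝ} (v : E)
    {x : E} (hf : AnalyticAt ℝ f x) (n : ℕ) : AnalyticAt ℝ (auxD f v n) x := by
  induction n with
  | zero => exact hf
  | succ n ih =>
    exact ((ContinuousLinearMap.apply ℝ ℝ v).analyticAt _).comp ih.fderiv

theorem auxD_hasDerivAt {E : Type*} [NormedAddCommGroup E] [NormedSpace ℝ E] {f : E → ℝ} (v : E)
    {x : E} {t : ℝ} (hf : AnalyticAt ℝ f (x + t • v)) (n : ℕ) :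
    HasDerivAt (fun s : ℝ => auxD f v n (x + s • v)) (auxD f v (n+1) (x + t • v)) t := by
  have h1 := (auxD_analytic v hf n).differentiableAt.hasFDerivAt
  have h2 : HasDerivAt (fun s : ℝ => x + s • v) v t := by
    simpa using ((hasDerivAt_id t).smul_const v).const_add x
  exact h1.comp_hasDerivAt t h2

theorem auxD_iter {E : Type*} [NormedAddCommGroup E] [NormedSpace ℝ E] {f : E → ℝ} (v : E)
    {x : E} (hf : AnalyticAt ℝ f x) (n : ℕ) :
    ∀ᶠ t : ℝ in 𝓝 0, iteratedDeriv n (fun s : ℝ => f (x + s • v)) t = auxD f v n (x + t • v) := by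
  induction n with
  | zero => simp [auxD]
  | succ n ih =>
    have hc : Tendsto (fun s : ℝ => x + s • v) (𝓝 0) (𝓝 x) := by
      have : Continuous (fun s : ℝ => x + s • v) := by fun_prop
      simpa using this.tendsto 0
    have hA := hc.eventually hf.eventually_analyticAt
    filter_upwards [ih.eventually_nhds, hA] with t ht ha
    rw [iteratedDeriv_succ, EventuallyEq.deriv_eq (f := fun s => auxD f v n (x + s • v)) ht]
    exact (auxD_hasDerivAt v ha n).deriv

/-- Existence of a direction and order. -/
theorem aux_dir {E : Type*} [NormedAddCommGroup E] [NormedSpace ℝ E] (U : Set E)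
    (hUo : IsOpen U) (hUc : IsPreconnected U) (f : E → ℝ) (hf : ∀ x ∈ U, AnalyticAt ℝ f x)
    (hne : ∃ x ∈ U, f x ≠ 0) (x₀ : E) (hx₀ : x₀ ∈ U) : ∃ (v : E) (k : ℕ), auxD f v k x₀ ≠ 0 := by
  obtain ⟨r, hr, hrU⟩ := Metric.isOpen_iff.1 hUo x₀ hx₀
  have h1 : ∃ y ∈ Metric.ball x₀ r, f y ≠ 0 := by
    by_contra! hcon
    obtain ⟨y, hy, hy2⟩ := hne
    exact hy2 (AnalyticOnNhd.eqOn_zero_of_preconnected_of_eventuallyEq_zero (f := f) hf hUc hx₀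
      (Filter.eventually_of_mem (Metric.ball_mem_nhds x₀ hr) hcon) hy)
  obtain ⟨y, hy, hfy⟩ := h1
  refine ⟨y - x₀, ?_⟩
  by_contra! hcon
  set v := y - x₀
  have hball : ∀ t ∈ Set.Icc (0:ℝ) 1, x₀ + t • v ∈ Metric.ball x₀ r := by
    intro t ht
    rw [Metric.mem_ball, dist_eq_norm] at hy ⊢
    rw [add_sub_cancel_left, norm_smul, Real.norm_of_nonneg ht.1]
    exact lt_of_le_of_lt (mul_le_of_le_one_left (norm_nonneg _) ht.2) hy
  have han : AnalyticOnNhd ℝ (fun s : ℝ => f (x₀ + s • v)) (Set.Icc 0 1) := by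
    intro t ht
    have h2 : AnalyticAt ℝ (fun s : ℝ => x₀ + s • v) t := by fun_prop
    exact AnalyticAt.fun_comp (hf _ (hrU (hball t ht))) h2
  have h0 : (0:ℝ) ∈ Set.Icc (0:ℝ) 1 := by simp
  have hz : ∀ᶠ z in 𝓝 (0:ℝ), f (x₀ + z • v) = 0 := by
    rw [← analyticOrderAt_eq_top, ENat.eq_top_iff_forall_ge]
    intro n
    rw [natCast_le_analyticOrderAt_iff_iteratedDeriv_eq_zero (han 0 h0)]
    intro i _
    rw [(auxD_iter v (hf x₀ hx₀) i).self_of_nhds]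
    simpa using hcon i
  have := han.eqOn_zero_of_preconnected_of_eventuallyEq_zero isPreconnected_Icc h0 hz
    (show (1:ℝ) ∈ Set.Icc (0:ℝ) 1 by simp)
  apply hfy
  simpa [v] using this

/-- Averaging over translates. -/
theorem aux_avg {ℓ : ℕ} (x₀ v : EuclideanSpace ℝ (Fin ℓ)) (r : ℝ)
    (S : Set (EuclideanSpace ℝ (Fin ℓ))) (hS : MeasurableSet S) (hSr : S ⊆ Metric.ball x₀ r)
    (A : ENNReal) (hA : ∀ x, volume {t : ℝ | x + t • v ∈ S} ≤ A) :
    volume S ≤ A * volume (Metric.ball x₀ (r + ‖v‖)) := by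
  have hm : Measurable (fun p : EuclideanSpace ℝ (Fin ℓ) × ℝ =>
      S.indicator (1 : EuclideanSpace ℝ (Fin ℓ) → ENNReal) (p.1 + p.2 • v)) :=
    (measurable_one.indicator hS).comp (by fun_prop)
  calc volume S = ∫⁻ t : ℝ in Set.Icc 0 1, volume S := by simp
    _ = ∫⁻ t : ℝ in Set.Icc 0 1, ∫⁻ x, S.indicator (1 : EuclideanSpace ℝ (Fin ℓ) → ENNReal) (x + t • v) := by
      congr 1; ext t
      rw [lintegral_add_right_eq_self (fun x => S.indicator (1 : EuclideanSpace ℝ (Fin ℓ) → ENNReal) x) (t • v),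
        lintegral_indicator_one hS]
    _ = ∫⁻ x, ∫⁻ t : ℝ in Set.Icc 0 1, S.indicator (1 : EuclideanSpace ℝ (Fin ℓ) → ENNReal) (x + t • v) := by
      refine (lintegral_lintegral_swap ?_).symm
      exact hm.aemeasurable
    _ ≤ ∫⁻ x, (Metric.ball x₀ (r + ‖v‖)).indicator (fun _ => A) x := by
      refine lintegral_mono fun x => ?_
      by_cases hx : x ∈ Metric.ball x₀ (r + ‖v‖)
      · rw [Set.indicator_of_mem hx]
        refine le_trans (setLIntegral_le_lintegral _ _) ?_
        have hms : MeasurableSet {t : ℝ | x + t • v ∈ S} := by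
          have : Measurable (fun t : ℝ => x + t • v) := by fun_prop
          exact this hS
        refine le_trans (le_of_eq ?_) (hA x)
        rw [← lintegral_indicator_one hms]
        rfl
      · rw [Set.indicator_of_notMem hx]
        refine le_of_eq ?_
        rw [setLIntegral_congr_fun (g := fun _ => 0) measurableSet_Icc]
        · simp
        · intro t ht
          apply Set.indicator_of_notMem
          intro hxS
          apply hx
          have h1 := hSr hxS
          rw [Metric.mem_ball, dist_eq_norm] at h1 ⊢
          have h2 : ‖t • v‖ ≤ ‖v‖ := by
            rw [norm_smul, Real.norm_of_nonneg ht.1]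
            exact mul_le_of_le_one_left (norm_nonneg _) ht.2
          calc ‖x - x₀‖ = ‖(x + t • v - x₀) - t • v‖ := by congr 1; abel
            _ ≤ ‖x + t • v - x₀‖ + ‖t • v‖ := norm_sub_le _ _
            _ < r + ‖v‖ := by linarith
    _ = _ := by rw [lintegral_indicator_const Metric.isOpen_ball.measurableSet]

/-- Sublevel estimate in several variables. -/
theorem aux_main {ℓ : ℕ} (x₀ v : EuclideanSpace ℝ (Fin ℓ)) (r c : ℝ) (hc : 0 < c) (k : ℕ)
    (f : EuclideanSpace ℝ (Fin ℓ) → ℝ) (hf : ∀ x ∈ Metric.ball x₀ r, AnalyticAt ℝ f x)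
    (hk : (∀ x ∈ Metric.ball x₀ r, c ≤ auxD f v k x) ∨
      (∀ x ∈ Metric.ball x₀ r, c ≤ - auxD f v k x)) :
    ∃ C : ENNReal, C ≠ ⊤ ∧ ∀ η : ℝ, 0 < η →
      volume {x | x ∈ Metric.ball x₀ r ∧ |f x| < c * η ^ k} ≤ ENNReal.ofReal η * C := by
  obtain ⟨C, hC, hsub⟩ := aux_sublevel k
  refine ⟨ENNReal.ofReal C * volume (Metric.ball x₀ (r + ‖v‖)),
    ENNReal.mul_ne_top ENNReal.ofReal_ne_top measure_ball_lt_top.ne, ?_⟩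
  intro η hη
  have hfc : ContinuousOn f (Metric.ball x₀ r) := fun x hx =>
    (hf x hx).continuousAt.continuousWithinAt
  have hS : MeasurableSet {x | x ∈ Metric.ball x₀ r ∧ |f x| < c * η ^ k} :=
    (hfc.abs.isOpen_inter_preimage Metric.isOpen_ball isOpen_Iio).measurableSet
  rw [← mul_assoc, ← ENNReal.ofReal_mul hη.le, mul_comm η C]
  refine aux_avg x₀ v r _ hS (fun x hx => hx.1) _ ?_
  intro x
  have hJ : Set.OrdConnected {t : ℝ | x + t • v ∈ Metric.ball x₀ r} := by
    refine Convex.ordConnected (𝕜 := ℝ) ?_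
    intro s hs t ht a b ha hb hab
    have h1 := convex_ball x₀ r hs ht ha hb hab
    have e : x + (a • s + b • t) • v = a • (x + s • v) + b • (x + t • v) := by
      have hx : x = a • x + b • x := by rw [← add_smul, hab, one_smul]
      simp only [smul_add, add_smul, smul_smul, smul_eq_mul]
      nth_rewrite 1 [hx]
      abel
    show x + (a • s + b • t) • v ∈ Metric.ball x₀ r
    rw [e]
    exact h1
  rcases hk with hk | hk
  · exact hsub (fun i t => auxD f v i (x + t • v)) _ c η hJ hc hη
      (fun i _ t ht => auxD_hasDerivAt v (hf _ ht) i) (fun t ht => hk _ ht)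
  · have := hsub (fun i t => - auxD f v i (x + t • v)) _ c η hJ hc hη
      (fun i _ t ht => (auxD_hasDerivAt v (hf _ ht) i).neg) (fun t ht => hk _ ht)
    simp only [abs_neg] at this
    exact this

/-- Integrability of the logarithm from geometric decay of sublevel sets. -/
theorem aux_log {ℓ : ℕ} (B : Set (EuclideanSpace ℝ (Fin ℓ))) (hB : IsOpen B)
    (hBv : volume B ≠ ⊤) (c M : ℝ) (hc : 0 < c) (k : ℕ)
    (f : EuclideanSpace ℝ (Fin ℓ) → ℝ) (g : EuclideanSpace ℝ (Fin ℓ) → ℂ)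
    (hf : ContinuousOn f B) (hg : ContinuousOn g B) (hfg : ∀ x, |f x| ≤ ‖g x‖)
    (hM : 1 ≤ M) (hgM : ∀ x ∈ B, ‖g x‖ ≤ M) (C : ENNReal) (hC : C ≠ ⊤)
    (h : ∀ η : ℝ, 0 < η → volume {x | x ∈ B ∧ |f x| < c * η ^ k} ≤ ENNReal.ofReal η * C) :
    IntegrableOn (fun x => |Real.log ‖g x‖|) B volume := by
  have hBm := hB.measurableSet
  set S : ℕ → Set (EuclideanSpace ℝ (Fin ℓ)) :=
    fun n => {x | x ∈ B ∧ |f x| < c * ((1/2 : ℝ)^n) ^ k} with hSdef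
  have hS : ∀ n, MeasurableSet (S n) := fun n =>
    (hf.abs.isOpen_inter_preimage hB isOpen_Iio).measurableSet
  have hSv : ∀ n, volume (S n) ≤ ENNReal.ofReal ((1/2:ℝ)^n) * C := fun n => h _ (by positivity)
  have hnull : volume (⋂ n, S n) = 0 := by
    have hle : ∀ n : ℕ, volume (⋂ n, S n) ≤ ENNReal.ofReal ((1/2:ℝ)^n) * C := fun n =>
      le_trans (measure_mono (Set.iInter_subset _ n)) (hSv n)
    have hlim : Tendsto (fun n : ℕ => ENNReal.ofReal ((1/2:ℝ)^n) * C) atTop (𝓝 0) := by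
      have h1 : Tendsto (fun n : ℕ => ENNReal.ofReal ((1/2:ℝ)^n)) atTop (𝓝 0) := by
        have := ENNReal.tendsto_ofReal
          (tendsto_pow_atTop_nhds_zero_of_lt_one (r := (1/2:ℝ)) (by norm_num) (by norm_num))
        simpa using this
      simpa using ENNReal.Tendsto.mul_const h1 (Or.inr hC)
    exact le_antisymm (ge_of_tendsto' hlim hle) zero_le
  refine ⟨?_, ?_⟩
  · have h1 : AEMeasurable g (volume.restrict B) := hg.aemeasurable hBm
    have h2 := Real.measurable_log.comp_aemeasurable h1.norm
    exact h2.abs.aestronglyMeasurable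
  · rw [hasFiniteIntegral_iff_enorm]
    set A : ℝ := Real.log M + |Real.log c| with hA
    have hA0 : 0 ≤ A := add_nonneg (Real.log_nonneg hM) (abs_nonneg _)
    set K : ℝ := k * Real.log 2 with hK
    have hK0 : 0 ≤ K := by positivity
    have hae : ∀ᵐ x ∂(volume.restrict B), ‖|Real.log ‖g x‖|‖ₑ ≤
        ENNReal.ofReal A + ENNReal.ofReal K * ∑' n, (S n).indicator (1 : EuclideanSpace ℝ (Fin ℓ) → ENNReal) x := by
      rw [ae_restrict_iff' hBm]
      have h0 : ∀ᵐ x ∂volume, x ∉ ⋂ n, S n := measure_eq_zero_iff_ae_notMem.1 hnull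
      filter_upwards [h0] with x hx hxB
      have hex : ∃ n, x ∉ S n := by simpa only [Set.mem_iInter, not_forall] using hx
      have hfx : 0 < |f x| := by
        obtain ⟨n, hn⟩ := hex
        by_contra! hlt
        exact hn ⟨hxB, lt_of_le_of_lt hlt (by positivity)⟩
      have hgx : 0 < ‖g x‖ := hfx.trans_le (hfg x)
      have hup : Real.log ‖g x‖ ≤ Real.log M := Real.log_le_log hgx (hgM x hxB)
      rw [Real.enorm_eq_ofReal (abs_nonneg _)]
      have hcase : ∃ N : ℕ, (∀ n < N, x ∈ S n) ∧ - Real.log ‖g x‖ ≤ |Real.log c| + N * K := by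
        classical
        refine ⟨Nat.find hex, fun n hn => not_not.1 (Nat.find_min hex hn), ?_⟩
        have hN := Nat.find_spec hex
        set N := Nat.find hex
        have hle : c * ((1/2 : ℝ)^N) ^ k ≤ ‖g x‖ := by
          refine le_trans ?_ (hfg x)
          by_contra! hlt
          exact hN ⟨hxB, hlt⟩
        have hlog := Real.log_le_log (by positivity) hle
        rw [Real.log_mul hc.ne' (by positivity), Real.log_pow, Real.log_pow, one_div,
          Real.log_inv] at hlog
        have := neg_abs_le (Real.log c)
        have e : (k:ℝ) * (N * -Real.log 2) = - (N * K) := by rw [hK]; ring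
        rw [e] at hlog
        linarith
      obtain ⟨N, hN, hlow⟩ := hcase
      have hsum : (N : ENNReal) ≤ ∑' n, (S n).indicator (1 : EuclideanSpace ℝ (Fin ℓ) → ENNReal) x := by
        refine le_trans (le_of_eq ?_) (ENNReal.sum_le_tsum (Finset.range N))
        rw [Finset.sum_congr rfl (g := fun _ => (1:ENNReal))]
        · simp
        · intro n hn
          exact Set.indicator_of_mem (hN n (Finset.mem_range.1 hn)) _
      calc ENNReal.ofReal |Real.log ‖g x‖| ≤ ENNReal.ofReal (A + K * N) := by
            apply ENNReal.ofReal_le_ofReal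
            have hKN : 0 ≤ K * N := by positivity
            have := Real.log_nonneg hM
            have := abs_nonneg (Real.log c)
            apply abs_le.2
            constructor <;> linarith [mul_comm K N]
        _ = ENNReal.ofReal A + ENNReal.ofReal K * N := by
            rw [ENNReal.ofReal_add hA0 (by positivity), ENNReal.ofReal_mul hK0,
              ENNReal.ofReal_natCast]
        _ ≤ _ := by gcongr
    refine lt_of_le_of_lt (lintegral_mono_ae hae) ?_
    have hmt : Measurable (fun x => ∑' n, (S n).indicator (1 : EuclideanSpace ℝ (Fin ℓ) → ENNReal) x) :=
      Measurable.ennreal_tsum fun n => measurable_one.indicator (hS n)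
    rw [lintegral_add_left measurable_const, lintegral_const_mul _ hmt,
      lintegral_tsum fun n => (measurable_one.indicator (hS n)).aemeasurable]
    have hb : ∑' n, ∫⁻ x in B, (S n).indicator (1 : EuclideanSpace ℝ (Fin ℓ) → ENNReal) x ≤
        (∑' n : ℕ, ENNReal.ofReal ((1/2:ℝ)^n)) * C := by
      rw [← ENNReal.tsum_mul_right]
      refine ENNReal.tsum_le_tsum fun n => ?_
      rw [lintegral_indicator_one (hS n)]
      exact (Measure.restrict_apply_le _ _).trans (hSv n)
    have hgeo : ∑' n : ℕ, ENNReal.ofReal ((1/2:ℝ)^n) ≠ ⊤ := by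
      rw [← ENNReal.ofReal_tsum_of_nonneg (fun n => by positivity) summable_geometric_two]
      exact ENNReal.ofReal_ne_top
    refine ENNReal.add_lt_top.2 ⟨?_, ?_⟩
    · rw [lintegral_const, Measure.restrict_apply_univ]
      exact ENNReal.mul_lt_top ENNReal.ofReal_lt_top hBv.lt_top
    · exact ENNReal.mul_lt_top ENNReal.ofReal_lt_top
        (hb.trans_lt (ENNReal.mul_lt_top hgeo.lt_top hC.lt_top))

/-- If `U ⊆ ℝ^ℓ` is open and connected and `g : U → ℂ` is real analytic
and not identically zero, then `ln|g|` is locally Lebesgue integrable on `U`: every point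
`x₀ ∈ U` has a neighborhood `V ⊆ U` with `∫_V |ln|g(x)|| dx < ∞`. -/
theorem stmt_17 {ℓ : ℕ} (U : Set (EuclideanSpace ℝ (Fin ℓ)))
    (hU_open : IsOpen U) (hU_conn : IsConnected U)
    (g : EuclideanSpace ℝ (Fin ℓ) → ℂ)
    (hg_an : ∀ x ∈ U, AnalyticAt ℝ g x)
    (hg_ne : ∃ x ∈ U, g x ≠ 0) :
    ∀ x₀ ∈ U, ∃ V : Set (EuclideanSpace ℝ (Fin ℓ)),
      V ⊆ U ∧ V ∈ 𝓝 x₀ ∧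
      IntegrableOn (fun x => |Real.log ‖g x‖|) V volume := by
  intro x₀ hx₀
  have hexf : ∃ f : EuclideanSpace ℝ (Fin ℓ) → ℝ, (∀ x ∈ U, AnalyticAt ℝ f x) ∧
      (∃ x ∈ U, f x ≠ 0) ∧ ∀ x, |f x| ≤ ‖g x‖ := by
    obtain ⟨y, hy, hgy⟩ := hg_ne
    by_cases hre : (g y).re = 0
    · refine ⟨fun x => (g x).im, fun x hx => ?_, ⟨y, hy, fun him => hgy (Complex.ext hre him)⟩,
        fun x => Complex.abs_im_le_norm _⟩
      exact (Complex.imCLM.analyticAt _).comp (hg_an x hx)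
    · refine ⟨fun x => (g x).re, fun x hx => ?_, ⟨y, hy, hre⟩,
        fun x => Complex.abs_re_le_norm _⟩
      exact (Complex.reCLM.analyticAt _).comp (hg_an x hx)
  obtain ⟨f, hf, hfne, hfg⟩ := hexf
  obtain ⟨v, k, hvk⟩ := aux_dir U hU_open hU_conn.isPreconnected f hf hfne x₀ hx₀
  set c : ℝ := |auxD f v k x₀| / 2 with hcdef
  have hc : 0 < c := by have := abs_pos.2 hvk; positivity
  have hDc : ContinuousAt (auxD f v k) x₀ := (auxD_analytic v (hf x₀ hx₀) k).continuousAt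
  have hev : ∀ᶠ x in 𝓝 x₀, x ∈ U ∧ ‖g x‖ < ‖g x₀‖ + 1 ∧ |auxD f v k x - auxD f v k x₀| < c := by
    refine Filter.Eventually.and (hU_open.mem_nhds hx₀) (Filter.Eventually.and ?_ ?_)
    · exact (hg_an x₀ hx₀).continuousAt.norm.eventually_lt_const (by linarith)
    · exact Metric.continuousAt_iff'.1 hDc c hc
  obtain ⟨r, hr, hball⟩ := Metric.eventually_nhds_iff_ball.1 hev
  refine ⟨Metric.ball x₀ r, fun x hx => (hball x hx).1, Metric.ball_mem_nhds x₀ hr, ?_⟩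
  have hk : (∀ x ∈ Metric.ball x₀ r, c ≤ auxD f v k x) ∨
      (∀ x ∈ Metric.ball x₀ r, c ≤ - auxD f v k x) := by
    rcases lt_or_gt_of_ne hvk with h | h
    · right
      intro x hx
      have h1 := abs_lt.1 (hball x hx).2.2
      rw [abs_of_neg h] at hcdef
      linarith [h1.2]
    · left
      intro x hx
      have h1 := abs_lt.1 (hball x hx).2.2
      rw [abs_of_pos h] at hcdef
      linarith [h1.1]
  obtain ⟨C, hC, hCb⟩ := aux_main x₀ v r c hc k f (fun x hx => hf x (hball x hx).1) hk
  exact aux_log (Metric.ball x₀ r) Metric.isOpen_ball measure_ball_lt_top.ne c (‖g x₀‖ + 1) hc k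
    f g (fun x hx => (hf x (hball x hx).1).continuousAt.continuousWithinAt)
    (fun x hx => (hg_an x (hball x hx).1).continuousAt.continuousWithinAt) hfg
    (by linarith [norm_nonneg (g x₀)]) (fun x hx => (hball x hx).2.1.le) C hC hCb
end
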